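/- arXiv:2209.11014 — 2 statements merged into one kernel-verified Lean document; each statement's English description precedes it below -/
import Mathlib

section
/- Fix integers n ≥ 1 and m ≥ 2 and α ∈ (0,1). Let W̄₀ be an mn×mn matrix satisfying Assumptions 1–3 with zero diagonal blocks, normalized so that 1/m is the largest eigenvalue of W̄₀Λ, this eigenvalue is simple, and its eigenspace is not contained in span{ε_k ⊗ 𝟙_m}; let p₁ = (p_{1,rt}) (1 ≤ r ≤ n, 1 ≤ t ≤ m) be a corresponding unit eigenvector. Suppose ḡ_a > mα² and that one of the following holds: (a) m = 2; (b) m = 3 and ḡ_a ≥ m(1+α)²; (c) m ≥ 4, ḡ_a ≥ m(1+α)², and (3/m)·Σ_{r=1}^n (Σ_{t=1}^m p_{1,rt}²)² ≥ Σ_{r=1}^n Σ_{t=1}^m p_{1,rt}⁴. Then for every ε > 0 there exists δ > 0 such that for every μ₁ ∈ (m(1+α), m(1+α)+δ), the system s̄' = μ₁ W̄₀ f̄(s̄) − s̄ − ā, ā' = ḡ_a f̄(s̄) − α ā on ℝ^{mn}×ℝ^{mn} has a nonconstant periodic solution t ↦ (s̄(t), ā(t)) (i.e., there is T > 0 with (s̄(t+T),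 ā(t+T)) = (s̄(t), ā(t)) for all t, and the solution is not constant) whose orbit is contained in the open ball of radius ε centered at the origin. -/
open scoped BigOperators
open Matrix

/-- The blockwise softmax `f : ℝ^{mn} → ℝ^{mn}`,
`f(s)_{ij} = exp(s_{ij}) / ∑_{l=1}^m exp(s_{il})`. -/
noncomputable def softmax (n m : ℕ) (s : Fin n × Fin m → ℝ) : Fin n × Fin m → ℝ :=
  fun p => Real.exp (s p) / ∑ l : Fin m, Real.exp (s (p.1, l))

/-- The centered blockwise softmax `f̄(s) = f(s) − (1/m)𝟙`. -/
noncomputable def fbar (n m : ℕ) (s : Fin n × Fin m → ℝ) : Fin n × Fin m → ℝ :=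
  fun p => softmax n m s p - 1 / m

/-- The matrix `Λ = Iₙ ⊗ ((1/m)Iₘ − (1/m²)𝟙ₘ𝟙ₘᵀ)`, written entrywise. -/
noncomputable def Lam (n m : ℕ) : Matrix (Fin n × Fin m) (Fin n × Fin m) ℝ :=
  Matrix.of fun p q =>
    if p.1 = q.1 then (if p.2 = q.2 then 1 / (m : ℝ) else 0) - 1 / (m : ℝ) ^ 2 else 0

/-- The circle of length `2π`, the domain of normalized periodic functions. -/
abbrev Circ : Type := AddCircle (2 * Real.pi)

instance Circ.fact_two_pi_pos : Fact (0 < 2 * Real.pi) := ⟨Real.two_pi_pos⟩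

section Resolvent

variable {F : Type*} [NormedAddCommGroup F] [NormedSpace ℝ F]

/-- The periodic solution `u` of `u' + u = v`, as a function on the circle. -/
noncomputable def resolventFun (v : C(Circ, F)) (θ : Circ) : F :=
  (1 - Real.exp (-(2 * Real.pi)))⁻¹ •
    ∫ x in (0 : ℝ)..(2 * Real.pi), Real.exp (-x) • v (θ - (x : Circ))

theorem continuous_resolventFun (v : C(Circ, F)) : Continuous (resolventFun v) := by
  unfold resolventFun
  refine Continuous.const_smul ?_ _
  refine intervalIntegral.continuous_parametric_intervalIntegral_of_continuous' ?_ _ _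
  have h : Continuous fun p : Circ × ℝ => ((p.2 : ℝ) : Circ) :=
    (AddCircle.continuous_mk' _).comp continuous_snd
  simp only [Function.uncurry_def]
  fun_prop

theorem one_sub_exp_neg_two_pi_pos : 0 < 1 - Real.exp (-(2 * Real.pi)) := by
  have := Real.two_pi_pos
  have h : Real.exp (-(2 * Real.pi)) < 1 := Real.exp_lt_one_iff.2 (by linarith)
  linarith

theorem intervalIntegrable_exp_smul_comp (v : C(Circ, F)) (θ : Circ) (a b : ℝ) :
    IntervalIntegrable (fun x : ℝ => Real.exp (-x) • v (θ - (x : Circ)))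
      MeasureTheory.volume a b := by
  have h : Continuous fun x : ℝ => (x : Circ) := AddCircle.continuous_mk' _
  exact Continuous.intervalIntegrable (by fun_prop) _ _

theorem norm_resolventFun_le (v : C(Circ, F)) (θ : Circ) : ‖resolventFun v θ‖ ≤ ‖v‖ := by
  have hpi := Real.two_pi_pos
  have hpos := one_sub_exp_neg_two_pi_pos
  have hint : ‖∫ x in (0 : ℝ)..(2 * Real.pi), Real.exp (-x) • v (θ - (x : Circ))‖
      ≤ ∫ x in (0 : ℝ)..(2 * Real.pi), Real.exp (-x) * ‖v‖ := by
    refine intervalIntegral.norm_integral_le_of_norm_le hpi.le ?_ ?_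
    · refine Filter.Eventually.of_forall fun x _ => ?_
      rw [norm_smul, Real.norm_eq_abs, abs_of_pos (Real.exp_pos _)]
      exact mul_le_mul_of_nonneg_left (v.norm_coe_le_norm _) (Real.exp_pos _).le
    · exact Continuous.intervalIntegrable (by fun_prop) _ _
  have hval : ∫ x in (0 : ℝ)..(2 * Real.pi), Real.exp (-x) * ‖v‖
      = (1 - Real.exp (-(2 * Real.pi))) * ‖v‖ := by
    rw [intervalIntegral.integral_mul_const, intervalIntegral.integral_comp_neg, integral_exp]
    simp
  rw [hval] at hint
  unfold resolventFun
  rw [norm_smul, Real.norm_eq_abs, abs_of_pos (inv_pos.2 hpos), inv_mul_le_iff₀ hpos]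
  exact hint

/-- The resolvent `(d/dτ + 1)⁻¹` on continuous functions on the circle. -/
noncomputable def resolvent1 : C(Circ, F) →L[ℝ] C(Circ, F) :=
  LinearMap.mkContinuous
    { toFun := fun v => ⟨resolventFun v, continuous_resolventFun v⟩
      map_add' := fun u v => by
        ext θ
        simp only [ContinuousMap.coe_mk, ContinuousMap.add_apply, resolventFun, smul_add]
        rw [intervalIntegral.integral_add (intervalIntegrable_exp_smul_comp u θ _ _)
          (intervalIntegrable_exp_smul_comp v θ _ _), smul_add]
      map_smul' := fun c v => by
        ext θ
        simp only [ContinuousMap.coe_mk, ContinuousMap.smul_apply, resolventFun, RingHom.id_apply]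
        simp only [smul_comm _ c, intervalIntegral.integral_smul] }
    1 (fun v => by
      rw [one_mul, ContinuousMap.norm_le _ (norm_nonneg _)]
      exact fun θ => norm_resolventFun_le v θ)

theorem norm_resolvent1_apply_le (v : C(Circ, F)) (θ : Circ) : ‖resolvent1 v θ‖ ≤ ‖v‖ :=
  norm_resolventFun_le v θ

theorem resolvent1_apply (v : C(Circ, F)) (t : ℝ) :
    resolvent1 v (t : Circ) = (1 - Real.exp (-(2 * Real.pi)))⁻¹ •
      Real.exp (-t) • ∫ y in (t - 2 * Real.pi)..t, Real.exp y • v (y : Circ) := by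
  change resolventFun v (t : Circ) = _
  unfold resolventFun
  congr 1
  rw [← intervalIntegral.integral_smul]
  have h := intervalIntegral.integral_comp_sub_left
    (a := 0) (b := 2 * Real.pi) (fun y : ℝ => Real.exp (-t) • Real.exp y • v (y : Circ)) t
  rw [sub_zero] at h
  rw [← h]
  refine intervalIntegral.integral_congr fun x _ => ?_
  simp only [smul_smul, ← Real.exp_add, AddCircle.coe_sub]
  congr 2
  ring

theorem hasDerivAt_resolvent1 [CompleteSpace F] (v : C(Circ, F)) (t : ℝ) :
    HasDerivAt (fun t : ℝ => resolvent1 v (t : Circ)) (v (t : Circ) - resolvent1 v (t : Circ)) t := by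
  have hc : Continuous fun y : ℝ => Real.exp y • v (y : Circ) := by
    have h : Continuous fun x : ℝ => (x : Circ) := AddCircle.continuous_mk' _
    fun_prop
  set G : ℝ → F := fun t => ∫ y in (0 : ℝ)..t, Real.exp y • v (y : Circ) with hG
  have hGd : ∀ t, HasDerivAt G (Real.exp t • v (t : Circ)) t := fun t =>
    intervalIntegral.integral_hasDerivAt_right (hc.intervalIntegrable _ _)
      (hc.stronglyMeasurableAtFilter _ _) hc.continuousAt
  have hsplit : ∀ t : ℝ, ∫ y in (t - 2 * Real.pi)..t, Real.exp y • v (y : Circ)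
      = G t - G (t - 2 * Real.pi) := fun t => by
    rw [hG]
    exact (intervalIntegral.integral_interval_sub_left (hc.intervalIntegrable _ _)
      (hc.intervalIntegrable _ _)).symm
  have hfun : (fun t : ℝ => resolvent1 v (t : Circ)) = fun t : ℝ =>
      (1 - Real.exp (-(2 * Real.pi)))⁻¹ • Real.exp (-t) • (G t - G (t - 2 * Real.pi)) := by
    funext t
    rw [resolvent1_apply, hsplit]
  have h2 : HasDerivAt (fun t => G (t - 2 * Real.pi))
      (Real.exp (t - 2 * Real.pi) • v (t : Circ)) t := by
    have := HasDerivAt.comp_sub_const t (2 * Real.pi) (hGd (t - 2 * Real.pi))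
    simpa [AddCircle.coe_sub, AddCircle.coe_period] using this
  have h3 : HasDerivAt (fun t : ℝ => Real.exp (-t)) (-Real.exp (-t)) t := by
    simpa using (hasDerivAt_neg t).exp
  have h4 := (h3.smul ((hGd t).sub h2)).const_smul (1 - Real.exp (-(2 * Real.pi)))⁻¹
  have hval : resolvent1 v (t : Circ) = (1 - Real.exp (-(2 * Real.pi)))⁻¹ • Real.exp (-t) •
      (G t - G (t - 2 * Real.pi)) := by rw [resolvent1_apply, hsplit]
  rw [hfun]
  refine h4.congr_deriv ?_
  rw [hval]
  have e1 : Real.exp (-t) * Real.exp t = 1 := by rw [← Real.exp_add]; simp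
  have e2 : Real.exp (-t) * Real.exp (t - 2 * Real.pi) = Real.exp (-(2 * Real.pi)) := by
    rw [← Real.exp_add]; congr 1; ring
  have hne := one_sub_exp_neg_two_pi_pos.ne'
  rw [← sub_smul, smul_smul (Real.exp (-t)), mul_sub, e1, e2, neg_smul, smul_add, smul_smul,
    inv_mul_cancel₀ hne, one_smul, smul_neg]
  exact (sub_eq_add_neg _ _).symm

theorem lipschitz_resolvent1 [CompleteSpace F] (v : C(Circ, F)) (s t : ℝ) :
    ‖resolvent1 v (s : Circ) - resolvent1 v (t : Circ)‖ ≤ 2 * ‖v‖ * |s - t| := by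
  have h := Convex.norm_image_sub_le_of_norm_hasDerivWithin_le (s := Set.univ) (x := t) (y := s)
    (f := fun t : ℝ => resolvent1 v (t : Circ)) (C := 2 * ‖v‖)
    (fun x _ => (hasDerivAt_resolvent1 v x).hasDerivWithinAt) (fun x _ => ?_) convex_univ
    (Set.mem_univ _) (Set.mem_univ _)
  · simpa using h
  · refine (norm_sub_le _ _).trans ?_
    have h1 := v.norm_coe_le_norm (x : Circ)
    have h2 := norm_resolvent1_apply_le v (x : Circ)
    linarith

theorem isCompactOperator_resolvent1 [FiniteDimensional ℝ F] :
    IsCompactOperator (resolvent1 : C(Circ, F) →L[ℝ] C(Circ, F)) := by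
  have : CompleteSpace F := FiniteDimensional.complete ℝ F
  have : ProperSpace F := FiniteDimensional.proper_real F
  refine (isCompactOperator_iff_isCompact_closure_image_closedBall
    (resolvent1 : C(Circ, F) →L[ℝ] C(Circ, F)).toLinearMap (r := 1) one_pos).2 ?_
  set e := (ContinuousMap.linearIsometryBoundedOfCompact Circ F ℝ) with he
  set A : Set (BoundedContinuousFunction Circ F) :=
    e '' ((resolvent1 : C(Circ, F) →L[ℝ] C(Circ, F)) '' Metric.closedBall 0 1) with hA
  have hcomp : IsCompact (closure A) := by
    refine BoundedContinuousFunction.arzela_ascoli (Metric.closedBall (0 : F) 1)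
      (isCompact_closedBall _ _) A ?_ ?_
    · rintro f x ⟨_, ⟨v, hv, rfl⟩, rfl⟩
      simp only [mem_closedBall_zero_iff] at hv ⊢
      exact (norm_resolvent1_apply_le v x).trans hv
    · refine UniformEquicontinuous.equicontinuous ?_
      refine LipschitzWith.uniformEquicontinuous _ 2 ?_
      rintro ⟨f, ⟨_, ⟨v, hv, rfl⟩, rfl⟩⟩
      refine LipschitzWith.of_dist_le_mul fun x y => ?_
      simp only [mem_closedBall_zero_iff] at hv
      change dist (resolvent1 v x) (resolvent1 v y) ≤ _
      obtain ⟨d, hd, hd'⟩ : ∃ d : ℝ, (d : Circ) = x - y ∧ |d| = ‖x - y‖ := by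
        obtain ⟨d, hd⟩ := QuotientAddGroup.mk_surjective (x - y)
        have hd : (d : Circ) = x - y := hd
        refine ⟨d - round ((2 * Real.pi)⁻¹ * d) * (2 * Real.pi), ?_, ?_⟩
        · rw [AddCircle.coe_sub, hd]
          simp only [sub_eq_self]
          rw [← zsmul_eq_mul, AddCircle.coe_zsmul, AddCircle.coe_period, smul_zero]
        · rw [← hd, AddCircle.norm_eq]
      obtain ⟨y', rfl⟩ := QuotientAddGroup.mk_surjective y
      have hx : x = ((y' + d : ℝ) : Circ) := by
        rw [AddCircle.coe_add, hd]; simp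
      rw [dist_eq_norm, dist_eq_norm, ← hd']
      have h := lipschitz_resolvent1 v (y' + d) y'
      rw [← hx] at h
      refine h.trans ?_
      rw [add_sub_cancel_left]
      have := abs_nonneg d
      simp only [NNReal.coe_ofNat]
      nlinarith
  have himg : closure ((resolvent1 : C(Circ, F) →L[ℝ] C(Circ, F)) '' Metric.closedBall 0 1)
      = e ⁻¹' closure A := by
    rw [hA]
    exact (e.toHomeomorph.isClosedEmbedding.isInducing.closure_eq_preimage_closure_image _)
  change IsCompact (closure ((resolvent1 : C(Circ, F) →L[ℝ] C(Circ, F)) '' Metric.closedBall 0 1))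
  rw [himg]
  exact e.toHomeomorph.isClosedEmbedding.isCompact_preimage hcomp

end Resolvent

section ExpTail

variable {A : Type*} [NormedCommRing A] [NormedAlgebra ℝ A]

/-- The entire function `∑ xⁿ / (n + 3)!`, so that
`exp x = 1 + x + x² / 2 + x³ * expTail x`. -/
noncomputable def expTail (x : A) : A :=
  FormalMultilinearSeries.ofScalarsSum (𝕜 := ℝ) (fun n : ℕ => (((n + 3).factorial : ℝ))⁻¹) x

theorem expTail_radius :
    (FormalMultilinearSeries.ofScalars A (𝕜 := ℝ)
      (fun n : ℕ => (((n + 3).factorial : ℝ))⁻¹)).radius = ⊤ := by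
  refine FormalMultilinearSeries.ofScalars_radius_eq_top_of_tendsto A _
    (Filter.Eventually.of_forall fun n => inv_ne_zero (by positivity)) ?_
  have h : ∀ n : ℕ, ‖(((n.succ + 3).factorial : ℝ))⁻¹‖ / ‖(((n + 3).factorial : ℝ))⁻¹‖
      = 1 / (((n + 3 : ℕ) : ℝ) + 1) := by
    intro n
    have h1 : (n.succ + 3).factorial = (n + 3 + 1) * (n + 3).factorial := by
      rw [← Nat.factorial_succ]
    rw [h1]
    have : ((n + 3).factorial : ℝ) ≠ 0 := by positivity
    push_cast
    rw [norm_inv, norm_inv, Real.norm_eq_abs, Real.norm_eq_abs, abs_of_pos (by positivity),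
      abs_of_pos (by positivity)]
    field_simp
  simp only [h]
  exact tendsto_one_div_add_atTop_nhds_zero_nat.comp (Filter.tendsto_add_atTop_nat 3)

theorem contDiff_expTail [CompleteSpace A] : ContDiff ℝ 1 (expTail : A → A) := by
  have h := (FormalMultilinearSeries.ofScalars A (𝕜 := ℝ)
      (fun n : ℕ => (((n + 3).factorial : ℝ))⁻¹)).hasFPowerSeriesOnBall
      (by rw [expTail_radius]; exact ENNReal.zero_lt_top)
  rw [expTail_radius] at h
  have h2 := h.analyticOnNhd
  rw [Metric.eball_top] at h2
  exact h2.contDiff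

theorem hasSum_expTail [CompleteSpace A] (x : A) :
    HasSum (fun n : ℕ => (((n + 3).factorial : ℝ))⁻¹ • x ^ n) (expTail x) := by
  have h := (FormalMultilinearSeries.ofScalars A (𝕜 := ℝ)
      (fun n : ℕ => (((n + 3).factorial : ℝ))⁻¹)).hasFPowerSeriesOnBall
      (by rw [expTail_radius]; exact ENNReal.zero_lt_top)
  have h2 := h.hasSum (y := x) (by rw [expTail_radius]; simp)
  simp only [FormalMultilinearSeries.ofScalars_apply_eq, zero_add] at h2
  exact h2

theorem map_expTail [CompleteSpace A] {B : Type*} [NormedCommRing B] [NormedAlgebra ℝ B] [CompleteSpace B]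
    (φ : A →ₐ[ℝ] B) (hφ : Continuous φ) (x : A) : φ (expTail x) = expTail (φ x) := by
  have h := (hasSum_expTail x).map φ hφ
  refine h.unique ?_
  have h2 : (φ ∘ fun n : ℕ => (((n + 3).factorial : ℝ))⁻¹ • x ^ n)
      = fun n : ℕ => (((n + 3).factorial : ℝ))⁻¹ • (φ x) ^ n := by
    funext n; simp
  rw [h2]
  exact hasSum_expTail _

theorem Real.exp_eq_add_expTail (x : ℝ) :
    Real.exp x = 1 + x + x ^ 2 / 2 + x ^ 3 * expTail x := by
  have h := NormedSpace.exp_series_hasSum_exp' (𝕂 := ℝ) x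
  rw [← Real.exp_eq_exp_ℝ] at h
  have h2 := (hasSum_nat_add_iff' (f := fun n : ℕ => ((n.factorial : ℝ))⁻¹ • x ^ n) 3).2 h
  have h3 := (hasSum_expTail x).mul_left (x ^ 3)
  have h4 : (fun n : ℕ => x ^ 3 * ((((n + 3).factorial : ℝ))⁻¹ • x ^ n))
      = fun n : ℕ => (((n + 3).factorial : ℝ))⁻¹ • x ^ (n + 3) := by
    funext n
    simp only [smul_eq_mul]
    ring
  rw [h4] at h3
  have h5 := h2.unique h3
  simp only [Finset.sum_range_succ, Finset.sum_range_zero] at h5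
  norm_num [Nat.factorial] at h5
  linarith

end ExpTail

section ScalarSystem

theorem eq_zero_of_periodic_of_stable {ω α β g : ℝ} (hω : 0 < ω) (hβ : β < α)
    (hdet : 0 < g - α * β) (hg : 0 < g) {T : ℝ} (hT : 0 < T) {ξ η ξ' η' : ℝ → ℝ}
    (hξ : ∀ t, HasDerivAt ξ (ξ' t) t) (hη : ∀ t, HasDerivAt η (η' t) t)
    (eξ : ∀ t, ω * ξ' t = β * ξ t - η t) (eη : ∀ t, ω * η' t = g * ξ t - α * η t)
    (pξ : Function.Periodic ξ T) (pη : Function.Periodic η T) (t : ℝ) :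
    ξ t = 0 ∧ η t = 0 := by
  set ζ : ℝ → ℝ := fun t => g * ξ t - α * η t with hζ
  set En : ℝ → ℝ := fun t => ζ t ^ 2 + (g - α * β) * η t ^ 2 with hEn
  have dζ : ∀ t, HasDerivAt ζ (g * ξ' t - α * η' t) t := fun t =>
    ((hξ t).const_mul g).sub ((hη t).const_mul α)
  have ωdζ : ∀ t, ω * (g * ξ' t - α * η' t) = (β - α) * ζ t - (g - α * β) * η t := by
    intro t
    have h1 := eξ t
    have h2 := eη t
    simp only [hζ]
    linear_combination g * h1 - α * h2
  have dE : ∀ t, HasDerivAt En (2 * (β - α) / ω * ζ t ^ 2) t := by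
    intro t
    have h := ((dζ t).pow 2).add (((hη t).pow 2).const_mul (g - α * β))
    refine h.congr_deriv ?_
    have h1 := ωdζ t
    have h2 : ω * η' t = ζ t := eη t
    field_simp
    push_cast
    simp only [pow_one]
    linear_combination 2 * ζ t * h1 + 2 * (g - α * β) * η t * h2
  have hanti : Antitone En := antitone_of_hasDerivAt_nonpos dE fun t => by
    have : 2 * (β - α) / ω ≤ 0 := div_nonpos_of_nonpos_of_nonneg (by linarith) hω.le
    exact mul_nonpos_of_nonpos_of_nonneg this (sq_nonneg _)
  have pE : Function.Periodic En T := fun t => by simp only [hEn, hζ, pξ t, pη t]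
  have hζ0 : ∀ t, ζ t = 0 := by
    intro t
    have hconst : En =ᶠ[nhds t] fun _ => En t := by
      filter_upwards [Ioo_mem_nhds (show t - T < t by linarith) (show t < t + T by linarith)]
        with x hx
      have h1 := hanti hx.1.le
      have h2 := hanti hx.2.le
      have h3 := pE (t - T)
      have h4 := pE t
      rw [sub_add_cancel] at h3
      linarith
    have h := (dE t).unique ((hasDerivAt_const t (En t)).congr_of_eventuallyEq hconst)
    have hne : 2 * (β - α) / ω ≠ 0 := div_ne_zero (by linarith) hω.ne'
    simpa [hne] using h
  have hη0 : η t = 0 := by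
    have hz : ζ = fun _ => 0 := funext hζ0
    have h := dζ t
    rw [hz] at h
    have h1 := h.unique (hasDerivAt_const t (0 : ℝ))
    have h2 := ωdζ t
    rw [h1, hζ0 t, mul_zero, mul_zero, zero_sub, zero_eq_neg] at h2
    exact (mul_eq_zero.1 h2).resolve_left hdet.ne'
  refine ⟨?_, hη0⟩
  have h := hζ0 t
  simp only [hζ, hη0, mul_zero, sub_zero] at h
  exact (mul_eq_zero.1 h).resolve_left hg.ne'

theorem eq_zero_of_center {ω α g : ℝ} (hω : 0 < ω) (hg : g = ω ^ 2 + α ^ 2) {ξ η ξ' η' : ℝ → ℝ}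
    (hξ : ∀ t, HasDerivAt ξ (ξ' t) t) (hη : ∀ t, HasDerivAt η (η' t) t)
    (eξ : ∀ t, ω * ξ' t = α * ξ t - η t) (eη : ∀ t, ω * η' t = g * ξ t - α * η t)
    (hξ0 : ξ 0 = 0) (hη0 : η 0 = 0) (t : ℝ) : ξ t = 0 ∧ η t = 0 := by
  set ζ : ℝ → ℝ := fun t => g * ξ t - α * η t with hζ
  set En : ℝ → ℝ := fun t => ζ t ^ 2 + ω ^ 2 * η t ^ 2 with hEn
  have dζ : ∀ t, HasDerivAt ζ (g * ξ' t - α * η' t) t := fun t =>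
    ((hξ t).const_mul g).sub ((hη t).const_mul α)
  have dE : ∀ t, HasDerivAt En 0 t := by
    intro t
    have h := ((dζ t).pow 2).add (((hη t).pow 2).const_mul (ω ^ 2))
    refine h.congr_deriv ?_
    have h1 := eξ t
    have h2 := eη t
    push_cast
    simp only [pow_one, hζ]
    have h3 : ω * (2 * (g * ξ t - α * η t) * (g * ξ' t - α * η' t)
        + ω ^ 2 * (2 * η t * η' t)) = 0 := by
      linear_combination 2 * (g * ξ t - α * η t) * g * h1
        + (2 * (g * ξ t - α * η t) * (- α) + 2 * ω ^ 2 * η t) * h2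
        + (-2 * η t * (g * ξ t - α * η t)) * hg
    exact (mul_eq_zero.1 h3).resolve_left hω.ne'
  have hE : En t = En 0 := is_const_of_deriv_eq_zero (fun t => (dE t).differentiableAt)
    (fun t => (dE t).deriv) t 0
  have hE0 : ζ t ^ 2 + ω ^ 2 * η t ^ 2 = 0 := by
    change En t = 0
    rw [hE]
    simp [hEn, hζ, hξ0, hη0]
  have h1 : ω ^ 2 * η t ^ 2 = 0 := by
    have := sq_nonneg (ζ t)
    have : 0 ≤ ω ^ 2 * η t ^ 2 := by positivity
    linarith
  have h2 : η t = 0 := by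
    have := (mul_eq_zero.1 h1).resolve_left (by positivity)
    exact pow_eq_zero_iff (two_ne_zero) |>.1 this
  have h3 : ζ t = 0 := by
    rw [h1, add_zero] at hE0
    exact pow_eq_zero_iff (two_ne_zero) |>.1 hE0
  refine ⟨?_, h2⟩
  simp only [hζ, h2, mul_zero, sub_zero] at h3
  have hg0 : 0 < g := by rw [hg]; positivity
  exact (mul_eq_zero.1 h3).resolve_left hg0.ne'

/-- Solvability conditions for the forced critical two-dimensional system. -/
theorem solvability_of_forced_center {ω α g c₁ c₂ : ℝ} (hg : g = ω ^ 2 + α ^ 2)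
    {ξ η ξ' η' ν : ℝ → ℝ}
    (hξ : ∀ t, HasDerivAt ξ (ξ' t) t) (hη : ∀ t, HasDerivAt η (η' t) t) (hν : Continuous ν)
    (eξ : ∀ t, ω * ξ' t = α * ξ t - η t + c₁ * Real.sin t + c₂ * Real.cos t + (1 + α) * ν t)
    (eη : ∀ t, ω * η' t = g * ξ t - α * η t - c₁ * (ω * Real.cos t - α * Real.sin t) + g * ν t)
    (pξ : ξ (2 * Real.pi) = ξ 0) (pη : η (2 * Real.pi) = η 0) :
    c₂ * (Real.pi * ω) + (∫ t in (0 : ℝ)..(2 * Real.pi),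
        ν t * ((1 + α) * ω * Real.cos t + (ω ^ 2 - α) * Real.sin t)) = 0 ∧
    -(2 * Real.pi * ω * c₁) - c₂ * (Real.pi * α) + (∫ t in (0 : ℝ)..(2 * Real.pi),
        ν t * ((ω ^ 2 - α) * Real.cos t - (1 + α) * ω * Real.sin t)) = 0 := by
  have hs := Real.hasDerivAt_sin
  have hc := Real.hasDerivAt_cos
  have icc : ∫ t in (0 : ℝ)..(2 * Real.pi), Real.cos t ^ 2 = Real.pi := by
    rw [integral_cos_sq]; simp
  have iss : ∫ t in (0 : ℝ)..(2 * Real.pi), Real.sin t ^ 2 = Real.pi := by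
    rw [integral_sin_sq]; simp
  have isc : ∫ t in (0 : ℝ)..(2 * Real.pi), Real.sin t * Real.cos t = 0 := by
    rw [integral_sin_mul_cos₁]; simp
  constructor
  · have d : ∀ t ∈ Set.uIcc (0 : ℝ) (2 * Real.pi), HasDerivAt
        (fun t => ω * (ξ t * (ω * Real.cos t - α * Real.sin t) + η t * Real.sin t))
        (c₂ * (ω * Real.cos t ^ 2 - α * (Real.sin t * Real.cos t)) +
          ν t * ((1 + α) * ω * Real.cos t + (ω ^ 2 - α) * Real.sin t)) t := by
      intro t _
      have h := (((hξ t).mul (((hc t).const_mul ω).sub ((hs t).const_mul α))).add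
        ((hη t).mul (hs t))).const_mul ω
      refine h.congr_deriv ?_
      have h1 := eξ t
      have h2 := eη t
      simp only [Pi.sub_apply]
      linear_combination (ω * Real.cos t - α * Real.sin t) * h1 + Real.sin t * h2 +
        (ξ t * Real.sin t + ν t * Real.sin t) * hg
    have h := intervalIntegral.integral_eq_sub_of_hasDerivAt d
      (Continuous.intervalIntegrable (by fun_prop) _ _)
    rw [intervalIntegral.integral_add (Continuous.intervalIntegrable (by fun_prop) _ _)
      (Continuous.intervalIntegrable (by fun_prop) _ _), intervalIntegral.integral_const_mul,
      intervalIntegral.integral_sub (Continuous.intervalIntegrable (by fun_prop) _ _)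
      (Continuous.intervalIntegrable (by fun_prop) _ _), intervalIntegral.integral_const_mul,
      intervalIntegral.integral_const_mul, icc, isc, pξ, pη] at h
    simp only [Real.cos_two_pi, Real.sin_two_pi, Real.cos_zero, Real.sin_zero, sub_self] at h
    linarith
  · have d : ∀ t ∈ Set.uIcc (0 : ℝ) (2 * Real.pi), HasDerivAt
        (fun t => ω * (ξ t * (-ω * Real.sin t - α * Real.cos t) + η t * Real.cos t))
        ((-(c₁ * ω) - c₂ * α) * Real.cos t ^ 2 - c₁ * ω * Real.sin t ^ 2
          - c₂ * ω * (Real.sin t * Real.cos t) +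
          ν t * ((ω ^ 2 - α) * Real.cos t - (1 + α) * ω * Real.sin t)) t := by
      intro t _
      have h := (((hξ t).mul (((hs t).const_mul (-ω)).sub ((hc t).const_mul α))).add
        ((hη t).mul (hc t))).const_mul ω
      refine h.congr_deriv ?_
      have h1 := eξ t
      have h2 := eη t
      simp only [Pi.sub_apply]
      linear_combination (-ω * Real.sin t - α * Real.cos t) * h1 + Real.cos t * h2 +
        (ξ t * Real.cos t + ν t * Real.cos t) * hg
    have h := intervalIntegral.integral_eq_sub_of_hasDerivAt d
      (Continuous.intervalIntegrable (by fun_prop) _ _)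
    rw [intervalIntegral.integral_add (Continuous.intervalIntegrable (by fun_prop) _ _)
      (Continuous.intervalIntegrable (by fun_prop) _ _),
      intervalIntegral.integral_sub (Continuous.intervalIntegrable (by fun_prop) _ _)
      (Continuous.intervalIntegrable (by fun_prop) _ _),
      intervalIntegral.integral_sub (Continuous.intervalIntegrable (by fun_prop) _ _)
      (Continuous.intervalIntegrable (by fun_prop) _ _), intervalIntegral.integral_const_mul,
      intervalIntegral.integral_const_mul, intervalIntegral.integral_const_mul, icc, iss, isc,
      pξ, pη] at h
    simp only [Real.cos_two_pi, Real.sin_two_pi, Real.cos_zero, Real.sin_zero, sub_self] at h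
    linarith

/-- The resonant Fourier coefficient of the cubic forcing. -/
theorem integral_cubic_forcing (a k β₀ β₂ γ κ : ℝ) :
    ∫ t in (0 : ℝ)..(2 * Real.pi),
      (4 * Real.cos t * (β₀ + β₂ * Real.cos (2 * t) + γ * Real.sin (2 * t)) + κ * Real.cos t ^ 3)
        * (a * Real.cos t + k * Real.sin t)
      = 2 * Real.pi * (a * (3 * κ / 8 + 2 * β₀ + β₂) + k * γ) := by
  have hs := Real.hasDerivAt_sin
  have hc := Real.hasDerivAt_cos
  have d : ∀ t ∈ Set.uIcc (0 : ℝ) (2 * Real.pi), HasDerivAt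
      (fun t => (a * (4 * β₀ - 4 * β₂) + 8 * k * γ) * ((t + Real.sin t * Real.cos t) / 2)
        + (a * (8 * β₂ + κ) - 8 * k * γ) *
          (3 * t / 8 + 3 * (Real.sin t * Real.cos t) / 8 + Real.sin t * Real.cos t ^ 3 / 4)
        - (8 * a * γ + k * (8 * β₂ + κ)) * (Real.cos t ^ 4 / 4)
        + k * (4 * β₀ - 4 * β₂) * (Real.sin t ^ 2 / 2))
      ((4 * Real.cos t * (β₀ + β₂ * Real.cos (2 * t) + γ * Real.sin (2 * t)) + κ * Real.cos t ^ 3)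
        * (a * Real.cos t + k * Real.sin t)) t := by
    intro t _
    have h1 := ((hasDerivAt_id' t).add ((hs t).mul (hc t))).div_const 2
    have h2 := (((((hasDerivAt_id' t).const_mul 3).div_const 8).add
      ((((hs t).mul (hc t)).const_mul 3).div_const 8)).add
        (((hs t).mul ((hc t).pow 3)).div_const 4))
    have h3 := ((hc t).pow 4).div_const 4
    have h4 := ((hs t).pow 2).div_const 2
    have h := (((h1.const_mul (a * (4 * β₀ - 4 * β₂) + 8 * k * γ)).add
      (h2.const_mul (a * (8 * β₂ + κ) - 8 * k * γ))).sub
        (h3.const_mul (8 * a * γ + k * (8 * β₂ + κ)))).add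
          (h4.const_mul (k * (4 * β₀ - 4 * β₂)))
    refine h.congr_deriv ?_
    have e : Real.sin t ^ 2 = 1 - Real.cos t ^ 2 := by
      linarith [Real.sin_sq_add_cos_sq t]
    rw [Real.cos_two_mul, Real.sin_two_mul]
    simp only [Pi.pow_apply]
    push_cast
    simp only [pow_one]
    ring_nf
    simp only [e]
    ring
  rw [intervalIntegral.integral_eq_sub_of_hasDerivAt d
      (Continuous.intervalIntegrable (by fun_prop) _ _)]
  simp only [Real.cos_two_pi, Real.sin_two_pi, Real.cos_zero, Real.sin_zero]
  ring

end ScalarSystem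

section QuadraticResponse

theorem quadratic_response_sign {α W z : ℝ} (hα : 0 < α) (hα1 : α < 1) (hz : 0 ≤ z)
    (hW : 1 + 2 * α ≤ W) :
    let q := W + α * z
    let k := q - 4 * W
    2 * (k ^ 2 + 4 * W * z ^ 2) * (1 + α) * (α - q) +
      q * ((1 + α) * ((α - q) * k + 4 * W * z * (1 + α - z))
        - 2 * (W - α) * ((1 + α - z) * k - z * (α - q))) < 0 := by
  intro q k
  obtain ⟨v, rfl⟩ : ∃ v, W = 1 + 2 * α + v := ⟨W - 1 - 2 * α, by ring⟩
  obtain ⟨b, hb⟩ : ∃ b, b = 1 - α := ⟨_, rfl⟩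
  have hv : 0 ≤ v := by linarith
  have hb0 : 0 ≤ b := by linarith
  have hpos : 0 < 9 + 27 * v + 27 * v ^ 2 + 9 * v ^ 3 + 54 * α + 117 * α * v + 72 * α * v ^ 2 +
      9 * α * v ^ 3 + 117 * α ^ 2 + 162 * α ^ 2 * v + 45 * α ^ 2 * v ^ 2 + 108 * α ^ 3 +
      72 * α ^ 3 * v + 36 * α ^ 4 + 4 * z + 16 * z * v + 20 * z * v ^ 2 + 8 * z * v ^ 3 +
      11 * z * α + 38 * z * α * v + 20 * z * α * v ^ 2 + 9 * z * α ^ 2 + 8 * z * α ^ 2 * v +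
      10 * z * α ^ 3 + 8 * z * α ^ 4 + 12 * z ^ 2 + 24 * z ^ 2 * v + 12 * z ^ 2 * v ^ 2 +
      56 * z ^ 2 * α + 76 * z ^ 2 * α * v + 20 * z ^ 2 * α * v ^ 2 + 32 * z ^ 2 * α ^ 2 +
      32 * z ^ 2 * α ^ 2 * v + 12 * z ^ 3 * α + 12 * z ^ 3 * α * v + 36 * z ^ 3 * α ^ 2 +
      12 * z ^ 3 * α ^ 2 * v + 27 * z ^ 3 * α ^ 3 + 3 * z ^ 3 * α ^ 4 +
      7 * z * α * v ^ 2 * b + 10 * z * α ^ 2 * v * b + 6 * z ^ 2 * α ^ 2 * b +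
      13 * z ^ 2 * α ^ 2 * v * b + 31 * z ^ 2 * α ^ 2 * b * (1 + α) := by
    positivity
  refine neg_pos.1 (hpos.trans_eq ?_)
  simp only [q, k, hb]
  ring

theorem scalar_quadratic_response {ω α x : ℝ} (hω : 0 < ω) (hα : 0 < α) (hα1 : α < 1) (hx : x ≤ 1) :
    ∃ c0 c2 d2 η0 η2 ζ2 : ℝ,
      0 = (1 + α) * (x * (c0 + 1)) - c0 - η0 ∧
      0 = (ω ^ 2 + α ^ 2) * (c0 + 1) - α * η0 ∧
      2 * ω * d2 = (1 + α) * (x * (c2 + 1)) - c2 - η2 ∧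
      -(2 * ω * c2) = (1 + α) * (x * d2) - d2 - ζ2 ∧
      2 * ω * ζ2 = (ω ^ 2 + α ^ 2) * (c2 + 1) - α * η2 ∧
      -(2 * ω * η2) = (ω ^ 2 + α ^ 2) * d2 - α * ζ2 ∧
      (1 + 2 * α ≤ ω ^ 2 →
        (1 + α) * (c0 + c2 / 2) + (ω ^ 2 - α) / (2 * ω) * d2 < 0) := by
  obtain ⟨z, hz⟩ : ∃ z, z = (1 + α) - (1 + α) * x := ⟨_, rfl⟩
  have hz0 : 0 ≤ z := by rw [hz]; nlinarith
  obtain ⟨q, hq⟩ : ∃ q, q = ω ^ 2 + α * z := ⟨_, rfl⟩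
  have hq0 : 0 < q := by rw [hq]; positivity
  obtain ⟨k, hk⟩ : ∃ k, k = q - 4 * ω ^ 2 := ⟨_, rfl⟩
  obtain ⟨D, hD⟩ : ∃ D, D = k ^ 2 + 4 * ω ^ 2 * z ^ 2 := ⟨_, rfl⟩
  have hD0 : 0 < D := by
    rcases hz0.eq_or_lt with h | h
    · have : k = -3 * ω ^ 2 := by rw [hk, hq, ← h]; ring
      rw [hD, this, ← h]; positivity
    · rw [hD]; positivity
  have hx' : (1 + α) * x = 1 + α - z := by rw [hz]; ring
  refine ⟨(α - q) / q, ((α - q) * k + 4 * ω ^ 2 * z * (1 + α - z)) / D,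
    -2 * ω * ((1 + α - z) * k - z * (α - q)) / D, (ω ^ 2 + α ^ 2) / q,
    (ω ^ 2 + α ^ 2) * (k + 4 * ω ^ 2 * z) / D, -(ω ^ 2 + α ^ 2) * (2 * ω * k - 2 * ω * z) / D,
    ?_, ?_, ?_, ?_, ?_, ?_, ?_⟩
  · rw [← mul_assoc, hx']; field_simp; rw [hq]; ring
  · field_simp; ring
  · rw [← mul_assoc, hx']; field_simp; rw [hD, hk, hq]; ring
  · rw [← mul_assoc, hx']; field_simp; rw [hk, hq]; ring
  · field_simp; rw [hD, hk, hq]; ring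
  · field_simp; rw [hk, hq]; ring
  · intro hW
    have h := quadratic_response_sign hα hα1 hz0 hW
    simp only [← hq, ← hk, ← hD] at h
    have e : (1 + α) * ((α - q) / q + ((α - q) * k + 4 * ω ^ 2 * z * (1 + α - z)) / D / 2)
        + (ω ^ 2 - α) / (2 * ω) * (-2 * ω * ((1 + α - z) * k - z * (α - q)) / D)
        = (2 * D * (1 + α) * (α - q) +
      q * ((1 + α) * ((α - q) * k + 4 * ω ^ 2 * z * (1 + α - z))
        - 2 * (ω ^ 2 - α) * ((1 + α - z) * k - z * (α - q)))) / (2 * q * D) := by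
      field_simp
      ring
    rw [e]
    exact div_neg_of_neg_of_pos h (by positivity)

end QuadraticResponse

section VectorResponse

variable {I K : Type*} [Fintype I] [Fintype K]

theorem exists_quadratic_response {ω α : ℝ} (hω : 0 < ω) (hα : 0 < α) (hα1 : α < 1)
    (M : (I → ℝ) →L[ℝ] (I → ℝ)) (e : K → I → ℝ) (x : K → ℝ)
    (he : ∀ v : I → ℝ, v = ∑ i, (e i ⬝ᵥ v) • e i) (hM : ∀ i, M (e i) = x i • e i)
    (hx : ∀ i, x i ≤ 1) (b : I → ℝ) (hb : b = 0 ∨ 1 + 2 * α ≤ ω ^ 2) :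
    ∃ u0 u2 v2 w0 w2 z2 : I → ℝ,
      0 = (1 + α) • M (u0 + b) - u0 - w0 ∧
      0 = (ω ^ 2 + α ^ 2) • (u0 + b) - α • w0 ∧
      (2 * ω) • v2 = (1 + α) • M (u2 + b) - u2 - w2 ∧
      -((2 * ω) • u2) = (1 + α) • M v2 - v2 - z2 ∧
      (2 * ω) • z2 = (ω ^ 2 + α ^ 2) • (u2 + b) - α • w2 ∧
      -((2 * ω) • w2) = (ω ^ 2 + α ^ 2) • v2 - α • z2 ∧
      (1 + α) * (b ⬝ᵥ u0 + b ⬝ᵥ u2 / 2) + (ω ^ 2 - α) / (2 * ω) * (b ⬝ᵥ v2) ≤ 0 ∧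
      (b ≠ 0 →
        (1 + α) * (b ⬝ᵥ u0 + b ⬝ᵥ u2 / 2) + (ω ^ 2 - α) / (2 * ω) * (b ⬝ᵥ v2) < 0) := by
  choose c0 c2 d2 η0 η2 ζ2 h1 h2 h3 h4 h5 h6 hJ using
    fun i => scalar_quadratic_response hω hα hα1 (hx i)
  set f : (K → ℝ) → I → ℝ := fun c => ∑ i, (c i * (e i ⬝ᵥ b)) • e i with hf
  have hfb : b = f 1 := by
    rw [hf]; simpa using he b
  have fadd : ∀ c c', f (c + c') = f c + f c' := fun c c' => by
    simp only [hf, Pi.add_apply, add_mul, add_smul, Finset.sum_add_distrib]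
  have fsmul : ∀ (r : ℝ) c, f (r • c) = r • f c := fun r c => by
    simp only [hf, Pi.smul_apply, smul_eq_mul, Finset.smul_sum, smul_smul, mul_assoc]
  have fsub : ∀ c c', f (c - c') = f c - f c' := fun c c' => by
    simp only [hf, Pi.sub_apply, sub_mul, sub_smul, Finset.sum_sub_distrib]
  have fneg : ∀ c, f (-c) = -f c := fun c => by
    simp only [hf, Pi.neg_apply, neg_mul, neg_smul, Finset.sum_neg_distrib]
  have fM : ∀ c, M (f c) = f (x * c) := fun c => by
    simp only [hf, map_sum, map_smul, hM, smul_smul, Pi.mul_apply]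
    refine Finset.sum_congr rfl fun i _ => ?_
    congr 1; ring
  have f0 : f 0 = 0 := by simp [hf]
  have fdot : ∀ c, b ⬝ᵥ f c = ∑ i, c i * (e i ⬝ᵥ b) ^ 2 := fun c => by
    simp only [hf, dotProduct_sum, dotProduct_smul, smul_eq_mul]
    refine Finset.sum_congr rfl fun i _ => ?_
    rw [dotProduct_comm b (e i)]; ring
  have hsum : (1 + α) * (b ⬝ᵥ f c0 + b ⬝ᵥ f c2 / 2) + (ω ^ 2 - α) / (2 * ω) * (b ⬝ᵥ f d2)
      = ∑ i, ((1 + α) * (c0 i + c2 i / 2) + (ω ^ 2 - α) / (2 * ω) * d2 i) * (e i ⬝ᵥ b) ^ 2 := by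
    simp only [fdot, Finset.mul_sum, Finset.sum_div, ← Finset.sum_add_distrib]
    refine Finset.sum_congr rfl fun i _ => ?_
    ring
  have hle : b ≠ 0 → (1 + α) * (b ⬝ᵥ f c0 + b ⬝ᵥ f c2 / 2)
      + (ω ^ 2 - α) / (2 * ω) * (b ⬝ᵥ f d2) < 0 := by
    intro hb0
    have hW := hb.resolve_left hb0
    obtain ⟨i, hi⟩ : ∃ i, e i ⬝ᵥ b ≠ 0 := by
      by_contra! hcon
      exact hb0 (by rw [he b]; simp [hcon])
    rw [hsum]
    refine Finset.sum_neg' (fun i _ => ?_) ⟨i, Finset.mem_univ _, ?_⟩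
    · exact mul_nonpos_of_nonpos_of_nonneg (hJ i hW).le (sq_nonneg _)
    · exact mul_neg_of_neg_of_pos (hJ i hW) (by positivity)
  refine ⟨f c0, f c2, f d2, f η0, f η2, f ζ2, ?_, ?_, ?_, ?_, ?_, ?_, ?_, hle⟩
  · rw [← f0, hfb, ← fadd, fM, ← fsmul, ← fsub, ← fsub]
    congr 1; funext i; simpa using h1 i
  · rw [← f0, hfb, ← fadd, ← fsmul, ← fsmul, ← fsub]
    congr 1; funext i; simpa [mul_add] using h2 i
  · rw [hfb, ← fadd, fM, ← fsmul, ← fsmul, ← fsub, ← fsub]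
    congr 1; funext i; simpa using h3 i
  · rw [fM, ← fsmul, ← fsmul, ← fsub, ← fsub, ← fneg]
    congr 1; funext i; simpa using h4 i
  · rw [hfb, ← fadd, ← fsmul, ← fsmul, ← fsmul, ← fsub]
    congr 1; funext i; simpa [mul_add] using h5 i
  · rw [← fsmul, ← fsmul, ← fsmul, ← fsub, ← fneg]
    congr 1; funext i; simpa using h6 i
  · by_cases hb0 : b = 0
    · simp [hb0]
    · exact (hle hb0).le

end VectorResponse

section AbstractBranch

open scoped Topology

variable {Z : Type*} [NormedAddCommGroup Z] [NormedSpace ℝ Z] [CompleteSpace Z]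

theorem IsCompactOperator.isInvertible_smul_one_sub {T : Z →L[ℝ] Z} (hT : IsCompactOperator T)
    {ω : ℝ} (hω : ω ≠ 0) (hinj : ∀ v, ω • v = T v → v = 0) :
    (ω • (1 : Z →L[ℝ] Z) - T).IsInvertible := by
  rcases hT.hasEigenvalue_or_mem_resolventSet hω with h | h
  · obtain ⟨v, hv⟩ := h.exists_hasEigenvector
    exact absurd (hinj v hv.apply_eq_smul.symm) hv.2
  · rw [spectrum.mem_resolventSet_iff, Algebra.algebraMap_eq_smul_one] at h
    obtain ⟨u, hu⟩ := h
    exact ⟨ContinuousLinearEquiv.unitsEquiv ℝ Z u, hu⟩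

theorem exists_zero_branch {Ψ : ℝ × Z → Z} {T : Z →L[ℝ] Z} (hT : T.IsInvertible) {f : Z}
    (h0 : ∀ v, Ψ (0, v) = T v - f) (hΨ : ∀ v, ContDiffAt ℝ 1 Ψ (0, v)) :
    ∃ ψ : ℝ → Z, T (ψ 0) = f ∧ ContDiffAt ℝ 1 ψ 0 ∧ ∀ᶠ r in 𝓝 0, Ψ (r, ψ r) = 0 := by
  obtain ⟨e, he⟩ := hT
  set v := e.symm f with hv
  have hTv : T v = f := by rw [← he]; simp [hv]
  have hd : fderiv ℝ Ψ (0, v) ∘L .inr ℝ ℝ Z = T := by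
    have h1 : HasFDerivAt (fun w : Z => Ψ (0, w)) (fderiv ℝ Ψ (0, v) ∘L .inr ℝ ℝ Z) v :=
      HasFDerivAt.comp (f := fun w : Z => ((0 : ℝ), w)) v
        ((hΨ v).differentiableAt one_ne_zero).hasFDerivAt (hasFDerivAt_prodMk_right 0 v)
    have h2 : HasFDerivAt (fun w : Z => Ψ (0, w)) T v := by
      simp only [h0]
      exact T.hasFDerivAt.sub_const f
    exact h1.unique h2
  have hi : (fderiv ℝ Ψ (0, v) ∘L .inr ℝ ℝ Z).IsInvertible := by
    rw [hd]; exact ⟨e, he⟩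
  refine ⟨(hΨ v).implicitFunction one_ne_zero hi, ?_,
    (hΨ v).contDiffAt_implicitFunction one_ne_zero hi, ?_⟩
  · rw [(hΨ v).implicitFunction_apply_self one_ne_zero hi]
    exact hTv
  · have h := (hΨ v).eventually_apply_implicitFunction one_ne_zero hi
    simpa [h0, hTv] using h

end AbstractBranch

section CircLift

variable {F : Type*} [NormedAddCommGroup F]

/-- The function on the circle induced by a continuous `2π`-periodic function. -/
noncomputable def circLift (f : ℝ → F) (hf : Continuous f)
    (hp : Function.Periodic f (2 * Real.pi)) : C(Circ, F) :=
  ⟨hp.lift, by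
    refine continuous_coinduced_dom.2 ?_
    exact hf⟩

theorem Circ.continuousMap_ext {f g : C(Circ, F)} (h : ∀ t : ℝ, f (t : Circ) = g (t : Circ)) :
    f = g := by
  ext θ
  induction θ using QuotientAddGroup.induction_on with
  | H t => exact h t

variable [NormedSpace ℝ F]

/-- The first harmonic `cos τ • u + sin τ • v`. -/
noncomputable def harmonic1 (u v : F) : C(Circ, F) :=
  circLift (fun t => Real.cos t • u + Real.sin t • v) (by fun_prop) (fun t => by simp)

/-- The trigonometric polynomial `w + cos 2τ • u + sin 2τ • v`. -/
noncomputable def harmonic2 (w u v : F) : C(Circ, F) :=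
  circLift (fun t => w + Real.cos (2 * t) • u + Real.sin (2 * t) • v) (by fun_prop) (fun t => by
    have h : 2 * (t + 2 * Real.pi) = 2 * t + 2 * Real.pi + 2 * Real.pi := by ring
    simp only [h, Real.cos_add_two_pi, Real.sin_add_two_pi])

@[simp] theorem harmonic1_coe (u v : F) (t : ℝ) :
    harmonic1 u v (t : Circ) = Real.cos t • u + Real.sin t • v := rfl

@[simp] theorem harmonic2_coe (w u v : F) (t : ℝ) :
    harmonic2 w u v (t : Circ) = w + Real.cos (2 * t) • u + Real.sin (2 * t) • v := rfl

theorem hasDerivAt_harmonic1 (u v : F) (t : ℝ) :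
    HasDerivAt (fun t : ℝ => harmonic1 u v (t : Circ)) (harmonic1 v (-u) (t : Circ)) t := by
  have h := ((Real.hasDerivAt_cos t).smul_const u).add ((Real.hasDerivAt_sin t).smul_const v)
  refine h.congr_deriv ?_
  simp only [harmonic1_coe]
  module

theorem hasDerivAt_harmonic2 (w u v : F) (t : ℝ) :
    HasDerivAt (fun t : ℝ => harmonic2 w u v (t : Circ))
      (harmonic2 0 ((2 : ℝ) • v) (-((2 : ℝ) • u)) (t : Circ)) t := by
  have h2 : HasDerivAt (fun t : ℝ => 2 * t) 2 t := by simpa using (hasDerivAt_id t).const_mul 2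
  have h := ((h2.cos.smul_const u).const_add w).add (h2.sin.smul_const v)
  refine h.congr_deriv ?_
  simp only [harmonic2_coe]
  module

end CircLift

section LinearizedOperator

variable {I : Type*}

/-- Pointwise application of a linear map to vector-valued functions on the circle. -/
noncomputable def postcomp (M : (I → ℝ) →L[ℝ] (I → ℝ)) :
    C(Circ, I → ℝ) →L[ℝ] C(Circ, I → ℝ) :=
  M.compLeftContinuous ℝ Circ

@[simp] theorem postcomp_apply (M : (I → ℝ) →L[ℝ] (I → ℝ)) (v : C(Circ, I → ℝ)) (θ : Circ) :
    postcomp M v θ = M (v θ) := rfl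

variable [Fintype I]

/-- The functional `v ↦ ⟨p, v 0⟩` on vector-valued functions on the circle. -/
noncomputable def pairAtZero (p : I → ℝ) : C(Circ, I → ℝ) →L[ℝ] ℝ :=
  (∑ i, p i • ContinuousLinearMap.proj (R := ℝ) (φ := fun _ : I => ℝ) i).comp
    (ContinuousMap.evalCLM ℝ (0 : Circ))

theorem pairAtZero_apply (p : I → ℝ) (v : C(Circ, I → ℝ)) : pairAtZero p v = p ⬝ᵥ v 0 := by
  simp [pairAtZero, dotProduct]

theorem HasDerivAt.const_dotProduct {f : ℝ → I → ℝ} {f' : I → ℝ} {t : ℝ} (h : HasDerivAt f f' t)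
    (q : I → ℝ) : HasDerivAt (fun t => q ⬝ᵥ f t) (q ⬝ᵥ f') t := by
  rw [hasDerivAt_pi] at h
  simp only [dotProduct]
  exact HasDerivAt.fun_sum fun i _ => (h i).const_mul (q i)

/-- The bounded factor of the compact part of the linearized periodic problem. -/
noncomputable def linearizedFactor (ω α : ℝ) (M : (I → ℝ) →L[ℝ] (I → ℝ)) (p : I → ℝ) :
    C(Circ, I → ℝ) × C(Circ, I → ℝ) →L[ℝ] C(Circ, I → ℝ) × C(Circ, I → ℝ) :=
  let u := ContinuousLinearMap.fst ℝ C(Circ, I → ℝ) C(Circ, I → ℝ)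
  let w := ContinuousLinearMap.snd ℝ C(Circ, I → ℝ) C(Circ, I → ℝ)
  ContinuousLinearMap.prod
    (ω • u - ((pairAtZero p).comp u).smulRight (harmonic1 0 (-p))
      + (1 + α) • (postcomp M).comp u
      + ((pairAtZero p).comp w).smulRight (harmonic1 p 0) - u - w)
    (ω • w - ((pairAtZero p).comp u).smulRight (harmonic1 (ω • p) (-(α • p)))
      + (ω ^ 2 + α ^ 2) • u - α • w)

/-- The compact part of the linearized periodic problem. -/
noncomputable def linearizedCompact (ω α : ℝ) (M : (I → ℝ) →L[ℝ] (I → ℝ)) (p : I → ℝ) :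
    C(Circ, I → ℝ) × C(Circ, I → ℝ) →L[ℝ] C(Circ, I → ℝ) × C(Circ, I → ℝ) :=
  (linearizedFactor ω α M p).comp (resolvent1.prodMap resolvent1)

theorem isCompactOperator_linearizedCompact (ω α : ℝ) (M : (I → ℝ) →L[ℝ] (I → ℝ)) (p : I → ℝ) :
    IsCompactOperator (linearizedCompact ω α M p) := by
  have hS := isCompactOperator_resolvent1 (F := I → ℝ)
  have h1 := (hS.comp_clm (ContinuousLinearMap.fst ℝ C(Circ, I → ℝ) C(Circ, I → ℝ))).clm_comp
    ((linearizedFactor ω α M p).comp (ContinuousLinearMap.inl ℝ _ _))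
  have h2 := (hS.comp_clm (ContinuousLinearMap.snd ℝ C(Circ, I → ℝ) C(Circ, I → ℝ))).clm_comp
    ((linearizedFactor ω α M p).comp (ContinuousLinearMap.inr ℝ _ _))
  have h : ⇑(linearizedCompact ω α M p) = _ + _ := funext fun V => by
    rw [linearizedCompact, ContinuousLinearMap.comp_apply]
    have hV : (resolvent1.prodMap resolvent1) V =
        ContinuousLinearMap.inl ℝ C(Circ, I → ℝ) C(Circ, I → ℝ) (resolvent1 V.1) +
        ContinuousLinearMap.inr ℝ C(Circ, I → ℝ) C(Circ, I → ℝ) (resolvent1 V.2) := by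
      simp only [ContinuousLinearMap.inl_apply, ContinuousLinearMap.inr_apply, Prod.mk_add_mk,
        add_zero, zero_add]
      rfl
    rw [hV, map_add]
    rfl
  rw [h]
  exact h1.add h2

theorem linearizedCompact_apply (ω α : ℝ) (M : (I → ℝ) →L[ℝ] (I → ℝ)) (p : I → ℝ)
    (V : C(Circ, I → ℝ) × C(Circ, I → ℝ)) :
    linearizedCompact ω α M p V =
      (ω • resolvent1 V.1 - pairAtZero p (resolvent1 V.1) • harmonic1 0 (-p)
        + (1 + α) • postcomp M (resolvent1 V.1)
        + pairAtZero p (resolvent1 V.2) • harmonic1 p 0 - resolvent1 V.1 - resolvent1 V.2,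
      ω • resolvent1 V.2 - pairAtZero p (resolvent1 V.1) • harmonic1 (ω • p) (-(α • p))
        + (ω ^ 2 + α ^ 2) • resolvent1 V.1 - α • resolvent1 V.2) := rfl

/-- The linearized periodic problem, with the frequency and parameter corrections read off from
the unknown at time zero. -/
noncomputable def linearizedOp (ω α : ℝ) (M : (I → ℝ) →L[ℝ] (I → ℝ)) (p : I → ℝ) :
    C(Circ, I → ℝ) × C(Circ, I → ℝ) →L[ℝ] C(Circ, I → ℝ) × C(Circ, I → ℝ) :=
  ω • (1 : C(Circ, I → ℝ) × C(Circ, I → ℝ) →L[ℝ] C(Circ, I → ℝ) × C(Circ, I → ℝ)) -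
    linearizedCompact ω α M p

theorem linearizedOp_apply (ω α : ℝ) (M : (I → ℝ) →L[ℝ] (I → ℝ)) (p : I → ℝ)
    (V : C(Circ, I → ℝ) × C(Circ, I → ℝ)) :
    linearizedOp ω α M p V = ω • V - linearizedCompact ω α M p V := rfl

/-- Scalar form of the linearized periodic problem, tested against an eigenvector. -/
theorem linearized_component {ω α x : ℝ} {M : (I → ℝ) →L[ℝ] (I → ℝ)} {p e : I → ℝ}
    (hMs : ∀ u v, u ⬝ᵥ M v = M u ⬝ᵥ v) (he : M e = x • e)
    {V : C(Circ, I → ℝ) × C(Circ, I → ℝ)} {Q : C(Circ, I → ℝ)}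
    (hV : linearizedOp ω α M p V =
      ((1 + α) • postcomp M Q, (ω ^ 2 + α ^ 2) • Q)) :
    (∀ t : ℝ, HasDerivAt (fun t : ℝ => e ⬝ᵥ resolvent1 V.1 (t : Circ))
      (e ⬝ᵥ (V.1 (t : Circ) - resolvent1 V.1 (t : Circ))) t) ∧
    (∀ t : ℝ, HasDerivAt (fun t : ℝ => e ⬝ᵥ resolvent1 V.2 (t : Circ))
      (e ⬝ᵥ (V.2 (t : Circ) - resolvent1 V.2 (t : Circ))) t) ∧
    (∀ t : ℝ, ω * (e ⬝ᵥ (V.1 (t : Circ) - resolvent1 V.1 (t : Circ))) =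
      ((1 + α) * x - 1) * (e ⬝ᵥ resolvent1 V.1 (t : Circ)) - e ⬝ᵥ resolvent1 V.2 (t : Circ)
        + (pairAtZero p (resolvent1 V.1) * Real.sin t + pairAtZero p (resolvent1 V.2) * Real.cos t)
          * (e ⬝ᵥ p) + (1 + α) * x * (e ⬝ᵥ Q (t : Circ))) ∧
    (∀ t : ℝ, ω * (e ⬝ᵥ (V.2 (t : Circ) - resolvent1 V.2 (t : Circ))) =
      (ω ^ 2 + α ^ 2) * (e ⬝ᵥ resolvent1 V.1 (t : Circ)) - α * (e ⬝ᵥ resolvent1 V.2 (t : Circ))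
        - pairAtZero p (resolvent1 V.1) * (ω * Real.cos t - α * Real.sin t) * (e ⬝ᵥ p)
        + (ω ^ 2 + α ^ 2) * (e ⬝ᵥ Q (t : Circ))) := by
  have heM : ∀ v, e ⬝ᵥ M v = x * (e ⬝ᵥ v) := fun v => by rw [hMs, he, smul_dotProduct, smul_eq_mul]
  refine ⟨fun t => (hasDerivAt_resolvent1 V.1 t).const_dotProduct e,
    fun t => (hasDerivAt_resolvent1 V.2 t).const_dotProduct e, fun t => ?_, fun t => ?_⟩
  · have h := congrArg (fun W : C(Circ, I → ℝ) × C(Circ, I → ℝ) => e ⬝ᵥ W.1 (t : Circ)) hV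
    simp only [linearizedOp_apply, linearizedCompact_apply,
      Prod.fst_sub, Prod.smul_fst, ContinuousMap.sub_apply, ContinuousMap.add_apply, ContinuousMap.smul_apply,
      postcomp_apply, harmonic1_coe, dotProduct_sub, dotProduct_add, dotProduct_smul,
      heM, smul_eq_mul, dotProduct_neg, smul_zero, add_zero, zero_add] at h ⊢
    linarith
  · have h := congrArg (fun W : C(Circ, I → ℝ) × C(Circ, I → ℝ) => e ⬝ᵥ W.2 (t : Circ)) hV
    simp only [linearizedOp_apply, linearizedCompact_apply,
      Prod.snd_sub, Prod.smul_snd, ContinuousMap.sub_apply, ContinuousMap.add_apply, ContinuousMap.smul_apply,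
      harmonic1_coe, dotProduct_sub, dotProduct_add, dotProduct_smul,
      smul_eq_mul, dotProduct_neg] at h ⊢
    linarith

theorem coe_add_two_pi (t : ℝ) : ((t + 2 * Real.pi : ℝ) : Circ) = (t : Circ) :=
  AddCircle.coe_add_period _ t

/-- The Fredholm conditions at the critical eigenvector determine the corrections. -/
theorem linearizedOp_solvability {ω α : ℝ} {M : (I → ℝ) →L[ℝ] (I → ℝ)} {p : I → ℝ}
    (hMs : ∀ u v, u ⬝ᵥ M v = M u ⬝ᵥ v) (hp : M p = p) (hpp : p ⬝ᵥ p = 1)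
    {V : C(Circ, I → ℝ) × C(Circ, I → ℝ)} {Q : C(Circ, I → ℝ)}
    (hV : linearizedOp ω α M p V = ((1 + α) • postcomp M Q, (ω ^ 2 + α ^ 2) • Q)) :
    pairAtZero p (resolvent1 V.2) * (Real.pi * ω) + (∫ t in (0 : ℝ)..(2 * Real.pi),
        (p ⬝ᵥ Q (t : Circ)) * ((1 + α) * ω * Real.cos t + (ω ^ 2 - α) * Real.sin t)) = 0 ∧
    -(2 * Real.pi * ω * pairAtZero p (resolvent1 V.1))
      - pairAtZero p (resolvent1 V.2) * (Real.pi * α) + (∫ t in (0 : ℝ)..(2 * Real.pi),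
        (p ⬝ᵥ Q (t : Circ)) * ((ω ^ 2 - α) * Real.cos t - (1 + α) * ω * Real.sin t)) = 0 := by
  obtain ⟨h1, h2, h3, h4⟩ := linearized_component (x := 1) hMs (by rw [hp, one_smul]) hV
  have hc : Continuous fun x : ℝ => (x : Circ) := AddCircle.continuous_mk' _
  refine solvability_of_forced_center (α := α) rfl h1 h2 ?_ (fun t => ?_) (fun t => ?_) ?_ ?_
  · simp only [dotProduct]
    fun_prop
  · rw [h3, hpp]; ring
  · rw [h4, hpp]; ring
  · simp only [← coe_add_two_pi 0, zero_add]
  · simp only [← coe_add_two_pi 0, zero_add]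

theorem isInvertible_linearizedOp {K : Type*} [Fintype K] {ω α : ℝ} (hω : 0 < ω) (hα : 0 < α)
    {M : (I → ℝ) →L[ℝ] (I → ℝ)} {p : I → ℝ}
    (hMs : ∀ u v, u ⬝ᵥ M v = M u ⬝ᵥ v) (hp : M p = p) (hpp : p ⬝ᵥ p = 1)
    {e : K → I → ℝ} {x : K → ℝ} (he : ∀ v : I → ℝ, v = ∑ i, (e i ⬝ᵥ v) • e i)
    (hM : ∀ i, M (e i) = x i • e i) (hx : ∀ i, x i < 1 ∨ ∃ c : ℝ, e i = c • p) :
    (linearizedOp ω α M p).IsInvertible := by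
  refine (isCompactOperator_linearizedCompact ω α M p).isInvertible_smul_one_sub hω.ne' ?_
  intro V hV
  have hV0 : linearizedOp ω α M p V = ((1 + α) • postcomp M 0, (ω ^ 2 + α ^ 2) • 0) := by
    rw [linearizedOp_apply, hV, sub_self, map_zero, smul_zero, smul_zero]
    rfl
  obtain ⟨hc2, hc1⟩ := linearizedOp_solvability hMs hp hpp hV0
  have hpi := Real.pi_pos
  simp only [ContinuousMap.zero_apply, dotProduct_zero, zero_mul, intervalIntegral.integral_zero,
    add_zero] at hc1 hc2
  have c2 : pairAtZero p (resolvent1 V.2) = 0 :=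
    (mul_eq_zero.1 hc2).resolve_right (by positivity)
  rw [c2, zero_mul, sub_zero, neg_eq_zero] at hc1
  have c1 : pairAtZero p (resolvent1 V.1) = 0 :=
    (mul_eq_zero.1 hc1).resolve_left (by positivity)
  have hpz : ∀ t : ℝ, p ⬝ᵥ resolvent1 V.1 (t : Circ) = 0 ∧ p ⬝ᵥ resolvent1 V.2 (t : Circ) = 0 := by
    obtain ⟨h1, h2, h3, h4⟩ := linearized_component (x := 1) hMs (by rw [hp, one_smul]) hV0
    refine fun t => eq_zero_of_center (α := α) hω rfl h1 h2 (fun t => ?_) (fun t => ?_) ?_ ?_ t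
    · rw [h3, c1, c2]; simp
    · rw [h4, c1]; simp
    · rw [pairAtZero_apply] at c1; exact c1
    · rw [pairAtZero_apply] at c2; exact c2
  have hez : ∀ i, ∀ t : ℝ,
      e i ⬝ᵥ resolvent1 V.1 (t : Circ) = 0 ∧ e i ⬝ᵥ resolvent1 V.2 (t : Circ) = 0 := by
    intro i
    rcases hx i with hi | ⟨c, hc⟩
    · obtain ⟨h1, h2, h3, h4⟩ := linearized_component hMs (hM i) hV0
      have hy : (1 + α) * x i - 1 < α := by nlinarith
      refine fun t => eq_zero_of_periodic_of_stable (α := α) (g := ω ^ 2 + α ^ 2) hω hy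
        (by nlinarith) (by positivity) Real.two_pi_pos h1 h2 (fun t => ?_) (fun t => ?_)
        (fun t => ?_) (fun t => ?_) t
      · rw [h3, c1, c2]; simp
      · rw [h4, c1]; simp
      · simp only [coe_add_two_pi]
      · simp only [coe_add_two_pi]
    · intro t
      simp [hc, smul_dotProduct, hpz t]
  have hS1 : ∀ t : ℝ, resolvent1 V.1 (t : Circ) = 0 := fun t => by
    rw [he (resolvent1 V.1 (t : Circ))]; simp [hez _ t]
  have hS2 : ∀ t : ℝ, resolvent1 V.2 (t : Circ) = 0 := fun t => by
    rw [he (resolvent1 V.2 (t : Circ))]; simp [hez _ t]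
  refine Prod.ext (Circ.continuousMap_ext fun t => ?_) (Circ.continuousMap_ext fun t => ?_)
  · have h := hasDerivAt_resolvent1 V.1 t
    simp only [hS1, sub_zero] at h
    exact h.unique (hasDerivAt_const t 0)
  · have h := hasDerivAt_resolvent1 V.2 t
    simp only [hS2, sub_zero] at h
    exact h.unique (hasDerivAt_const t 0)

end LinearizedOperator

section BlowUp

open scoped Topology

variable {X : Type*} [NormedCommRing X] [NormedAlgebra ℝ X] [CompleteSpace X]

/-- The rescaled nonlinearity `s + (r / 2) P ((P s)²) + r² Θ (r, s)`. -/
noncomputable def rescaledNonlinearity (P : X →L[ℝ] X) (Θ : ℝ × X → X) (r : ℝ) (s : X) : X :=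
  s + (r / 2) • P (P s ^ 2) + r ^ 2 • Θ (r, s)

theorem exists_branch_of_expansion (S P M : X →L[ℝ] X) (c : X →L[ℝ] ℝ) (Θ : ℝ × X → X)
    {ω h g α : ℝ} {s0 ds0 a0 da0 s1 ds1 a1 da1 : X} (hΘ : ContDiffAt ℝ 1 Θ (0, s0))
    (hs0 : ω • ds0 = h • M s0 - s0 - a0) (ha0 : ω • da0 = g • s0 - α • a0)
    (hs1 : ω • ds1 = h • M (s1 + (1 / 2 : ℝ) • P (P s0 ^ 2)) - s1 - a1)
    (ha1 : ω • da1 = g • (s1 + (1 / 2 : ℝ) • P (P s0 ^ 2)) - α • a1)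
    (hM : M s0 = s0) {T : X × X →L[ℝ] X × X} (hT : T.IsInvertible)
    (hTV : ∀ V, T V = (ω • (V.1 - S V.1) + c (S V.1) • ds0 - h • M (S V.1) - c (S V.2) • s0
      + S V.1 + S V.2, ω • (V.2 - S V.2) + c (S V.1) • da0 - g • S V.1 + α • S V.2)) :
    ∃ V : ℝ → X × X,
      T (V 0) = (h • M (P (P s0 * P s1) + Θ (0, s0)), g • (P (P s0 * P s1) + Θ (0, s0))) ∧
      ContDiffAt ℝ 1 V 0 ∧ ∀ᶠ r in 𝓝 0,
        (ω + r ^ 2 * c (S (V r).1)) • (ds0 + r • ds1 + r ^ 2 • ((V r).1 - S (V r).1)) =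
          (h + r ^ 2 * c (S (V r).2)) •
            M (rescaledNonlinearity P Θ r (s0 + r • s1 + r ^ 2 • S (V r).1))
          - (s0 + r • s1 + r ^ 2 • S (V r).1) - (a0 + r • a1 + r ^ 2 • S (V r).2) ∧
        (ω + r ^ 2 * c (S (V r).1)) • (da0 + r • da1 + r ^ 2 • ((V r).2 - S (V r).2)) =
          g • rescaledNonlinearity P Θ r (s0 + r • s1 + r ^ 2 • S (V r).1)
          - α • (a0 + r • a1 + r ^ 2 • S (V r).2) := by
  let st : ℝ × X × X → X := fun y => s0 + y.1 • s1 + y.1 ^ 2 • S y.2.1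
  let q : ℝ × X × X → X := fun y =>
    P (P s0 * P (s1 + y.1 • S y.2.1) + (y.1 / 2) • P (s1 + y.1 • S y.2.1) ^ 2) + Θ (y.1, st y)
  let Ψ : ℝ × X × X → X × X := fun y =>
    (ω • (y.2.1 - S y.2.1) + c (S y.2.1) • (ds0 + y.1 • ds1 + y.1 ^ 2 • (y.2.1 - S y.2.1))
      - h • M (S y.2.1 + q y)
      - c (S y.2.2) • M (s0 + y.1 • (s1 + (1 / 2 : ℝ) • P (P s0 ^ 2)) + y.1 ^ 2 • (S y.2.1 + q y))
      + S y.2.1 + S y.2.2,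
    ω • (y.2.2 - S y.2.2) + c (S y.2.1) • (da0 + y.1 • da1 + y.1 ^ 2 • (y.2.2 - S y.2.2))
      - g • (S y.2.1 + q y) + α • S y.2.2)
  have hst : ∀ r V, rescaledNonlinearity P Θ r (st (r, V)) =
      s0 + r • (s1 + (1 / 2 : ℝ) • P (P s0 ^ 2)) + r ^ 2 • (S V.1 + q (r, V)) := by
    intro r V
    have e : P (st (r, V)) = P s0 + r • P (s1 + r • S V.1) := by
      simp only [st, map_add, map_smul]; module
    have e2 : (P s0 + r • P (s1 + r • S V.1)) ^ 2 = P s0 ^ 2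
        + (2 * r) • (P s0 * P (s1 + r • S V.1) + (r / 2) • P (s1 + r • S V.1) ^ 2) := by
      rw [smul_add, smul_smul, add_sq, smul_pow, mul_smul_comm, mul_assoc, ← smul_eq_mul (a := (2 : X)), ofNat_smul_eq_nsmul]
      module
    rw [rescaledNonlinearity, e, e2]
    simp only [q, map_add P (P s0 ^ 2), map_smul P (2 * r)]
    simp only [st]
    module
  have hq : ∀ V, ContDiffAt ℝ 1 q (0, V) := by
    intro V
    have h1 : ContDiffAt ℝ 1 (fun y : ℝ × X × X => (y.1, st y)) (0, V) := by
      simp only [st]; fun_prop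
    have h2 : ContDiffAt ℝ 1 (fun y : ℝ × X × X => Θ (y.1, st y)) (0, V) := by
      refine ContDiffAt.comp (g := Θ) (0, V) ?_ h1
      simpa [st] using hΘ
    simp only [q]
    refine ContDiffAt.add ?_ h2
    fun_prop
  have hΨ : ∀ V, ContDiffAt ℝ 1 Ψ (0, V) := by
    intro V
    have := hq V
    simp only [Ψ]
    fun_prop
  have hΨ0 : ∀ V, Ψ (0, V) = T V - (h • M (P (P s0 * P s1) + Θ (0, s0)),
      g • (P (P s0 * P s1) + Θ (0, s0))) := by
    intro V
    have hq0 : q (0, V) = P (P s0 * P s1) + Θ (0, s0) := by simp [q, st]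
    rw [hTV]
    simp only [Ψ, hq0, map_add, map_smul, hM]
    refine Prod.ext ?_ ?_ <;> simp only [Prod.mk_sub_mk] <;> module
  obtain ⟨V, hV0, hV1, hV2⟩ := exists_zero_branch hT hΨ0 hΨ
  refine ⟨V, hV0, hV1, hV2.mono fun r hr => ?_⟩
  have hr1 := congrArg Prod.fst hr
  have hr2 := congrArg Prod.snd hr
  simp only [Ψ, Prod.fst_zero, Prod.snd_zero] at hr1 hr2
  have hphi := hst r (V r)
  simp only [st] at hphi
  rw [hphi]
  constructor
  · rw [← sub_eq_zero]
    rw [← sub_eq_zero] at hs0 hs1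
    have := congrArg₂ (· + ·) (congrArg₂ (· + ·) hs0 (congrArg (r • ·) hs1)) (congrArg (r ^ 2 • ·) hr1)
    simp only [smul_zero, add_zero] at this
    rw [← this]
    simp only [map_add, map_smul]
    module
  · rw [← sub_eq_zero]
    rw [← sub_eq_zero] at ha0 ha1
    have := congrArg₂ (· + ·) (congrArg₂ (· + ·) ha0 (congrArg (r • ·) ha1)) (congrArg (r ^ 2 • ·) hr2)
    simp only [smul_zero, add_zero] at this
    rw [← this]
    module

end BlowUp

section HopfBranch

open scoped Topology

variable {I K : Type*} [Fintype I] [Fintype K]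

theorem exists_hopf_branch {ω α : ℝ} (hω : 0 < ω) (hα : 0 < α) (hα1 : α < 1)
    {M P : (I → ℝ) →L[ℝ] (I → ℝ)} {p : I → ℝ}
    (hMs : ∀ u v, u ⬝ᵥ M v = M u ⬝ᵥ v) (hPs : ∀ u v, u ⬝ᵥ P v = P u ⬝ᵥ v)
    (hMp : M p = p) (hPp : P p = p) (hpp : p ⬝ᵥ p = 1)
    {e : K → I → ℝ} {x : K → ℝ} (he : ∀ v : I → ℝ, v = ∑ i, (e i ⬝ᵥ v) • e i)
    (hM : ∀ i, M (e i) = x i • e i) (hx1 : ∀ i, x i ≤ 1)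
    (hx : ∀ i, x i < 1 ∨ ∃ c : ℝ, e i = c • p)
    (hb : P (p ^ 2) = 0 ∨ 1 + 2 * α ≤ ω ^ 2)
    {Θ : ℝ × C(Circ, I → ℝ) → C(Circ, I → ℝ)} (hΘ : ContDiffAt ℝ 1 Θ (0, harmonic1 p 0))
    {κ : ℝ} (hΘκ : ∀ t : ℝ, p ⬝ᵥ Θ (0, harmonic1 p 0) (t : Circ) = κ * Real.cos t ^ 3)
    (hκ : κ ≤ 0) (hκ0 : P (p ^ 2) = 0 → κ < 0) :
    ∃ (c1 c2 : ℝ → ℝ) (s a ds da : ℝ → C(Circ, I → ℝ)),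
      0 < c2 0 ∧ s 0 = harmonic1 p 0 ∧
      (∀ᶠ r in 𝓝 0, ContinuousAt c1 r ∧ ContinuousAt c2 r ∧ ContinuousAt s r ∧ ContinuousAt a r) ∧
      (∀ r (t : ℝ), HasDerivAt (fun t : ℝ => s r (t : Circ)) (ds r (t : Circ)) t) ∧
      (∀ r (t : ℝ), HasDerivAt (fun t : ℝ => a r (t : Circ)) (da r (t : Circ)) t) ∧
      ∀ᶠ r in 𝓝 0,
        (ω + r ^ 2 * c1 r) • ds r = (1 + α + r ^ 2 * c2 r) •
          postcomp M (rescaledNonlinearity (postcomp P) Θ r (s r)) - s r - a r ∧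
        (ω + r ^ 2 * c1 r) • da r = (ω ^ 2 + α ^ 2) •
          rescaledNonlinearity (postcomp P) Θ r (s r) - α • a r := by
  obtain ⟨b, hbdef⟩ : ∃ b, b = (1 / 4 : ℝ) • P (p ^ 2) := ⟨_, rfl⟩
  have hPb : P (p ^ 2) = (4 : ℝ) • b := by rw [hbdef, smul_smul]; norm_num
  have hb0 : P (p ^ 2) = 0 ↔ b = 0 := by rw [hPb]; simp
  rw [hb0] at hb hκ0
  obtain ⟨u0, u2, v2, w0, w2, z2, h1, h2, h3, h4, h5, h6, hJ, hJ'⟩ :=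
    exists_quadratic_response hω hα hα1 M e x he hM hx1 b hb
  have hP0 : postcomp P (harmonic1 p 0) = harmonic1 p 0 := by
    refine Circ.continuousMap_ext fun t => ?_
    simp [hPp]
  have hB : (1 / 2 : ℝ) • postcomp P (postcomp P (harmonic1 p 0) ^ 2) = harmonic2 b b 0 := by
    rw [hP0]
    refine Circ.continuousMap_ext fun t => ?_
    have e1 : (Real.cos t • p) ^ 2 = (Real.cos t ^ 2) • p ^ 2 := smul_pow _ _ _
    simp only [ContinuousMap.smul_apply, postcomp_apply, ContinuousMap.pow_apply, harmonic1_coe,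
      smul_zero, add_zero, e1, map_smul, hPb, harmonic2_coe, Real.cos_two_mul]
    module
  obtain ⟨V, hV0, hV1, hV2⟩ := exists_branch_of_expansion resolvent1 (postcomp P) (postcomp M)
    (pairAtZero p) Θ (ω := ω) (h := 1 + α) (g := ω ^ 2 + α ^ 2) (α := α)
    (s0 := harmonic1 p 0) (ds0 := harmonic1 0 (-p)) (a0 := harmonic1 (α • p) (ω • p))
    (da0 := harmonic1 (ω • p) (-(α • p))) (s1 := harmonic2 u0 u2 v2)
    (ds1 := harmonic2 0 ((2 : ℝ) • v2) (-((2 : ℝ) • u2))) (a1 := harmonic2 w0 w2 z2)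
    (da1 := harmonic2 0 ((2 : ℝ) • z2) (-((2 : ℝ) • w2))) (T := linearizedOp ω α M p) hΘ
    (Circ.continuousMap_ext fun t => by
      simp only [ContinuousMap.smul_apply, ContinuousMap.sub_apply, postcomp_apply, harmonic1_coe,
        map_add, map_smul, hMp, map_zero]
      module)
    (Circ.continuousMap_ext fun t => by
      simp only [ContinuousMap.smul_apply, ContinuousMap.sub_apply, harmonic1_coe]
      module)
    (by
      rw [hB]
      refine Circ.continuousMap_ext fun t => ?_
      rw [← sub_eq_zero] at h1 h3 h4 ⊢
      simp only [map_add, ContinuousMap.smul_apply, ContinuousMap.sub_apply,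
        ContinuousMap.add_apply, postcomp_apply, harmonic2_coe, map_smul, map_zero] at h1 h3 h4 ⊢
      linear_combination (norm := module) h1 + Real.cos (2 * t) • h3 + Real.sin (2 * t) • h4)
    (by
      rw [hB]
      refine Circ.continuousMap_ext fun t => ?_
      rw [← sub_eq_zero] at h2 h5 h6 ⊢
      simp only [ContinuousMap.smul_apply, ContinuousMap.sub_apply,
        ContinuousMap.add_apply, harmonic2_coe] at h2 h5 h6 ⊢
      linear_combination (norm := module) h2 + Real.cos (2 * t) • h5 + Real.sin (2 * t) • h6)
    (Circ.continuousMap_ext fun t => by simp [hMp])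
    (isInvertible_linearizedOp hω hα hMs hMp hpp he hM hx)
    (fun V => by
      rw [linearizedOp_apply, linearizedCompact_apply]
      refine Prod.ext ?_ ?_ <;> simp only [Prod.fst_sub, Prod.snd_sub, Prod.smul_fst,
        Prod.smul_snd] <;> module)
  refine ⟨fun r => pairAtZero p (resolvent1 (V r).1), fun r => pairAtZero p (resolvent1 (V r).2),
    fun r => harmonic1 p 0 + r • harmonic2 u0 u2 v2 + r ^ 2 • resolvent1 (V r).1,
    fun r => harmonic1 (α • p) (ω • p) + r • harmonic2 w0 w2 z2 + r ^ 2 • resolvent1 (V r).2,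
    fun r => harmonic1 0 (-p) + r • harmonic2 0 ((2 : ℝ) • v2) (-((2 : ℝ) • u2))
      + r ^ 2 • ((V r).1 - resolvent1 (V r).1),
    fun r => harmonic1 (ω • p) (-(α • p)) + r • harmonic2 0 ((2 : ℝ) • z2) (-((2 : ℝ) • w2))
      + r ^ 2 • ((V r).2 - resolvent1 (V r).2), ?_, ?_, ?_, fun r t => ?_, fun r t => ?_, hV2⟩
  · have hsol := (linearizedOp_solvability hMs hMp hpp hV0).1
    have hν : ∀ t : ℝ, p ⬝ᵥ (postcomp P (postcomp P (harmonic1 p 0) *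
          postcomp P (harmonic2 u0 u2 v2)) + Θ (0, harmonic1 p 0)) (t : Circ) =
        4 * Real.cos t * (b ⬝ᵥ u0 + (b ⬝ᵥ u2) * Real.cos (2 * t) + (b ⬝ᵥ v2) * Real.sin (2 * t))
          + κ * Real.cos t ^ 3 := by
      intro t
      have e1 : ∀ y : I → ℝ, p ⬝ᵥ P ((Real.cos t • p) * P y) = 4 * Real.cos t * (b ⬝ᵥ y) := by
        intro y
        have e2 : p ⬝ᵥ ((Real.cos t • p) * P y) = Real.cos t * (p ^ 2 ⬝ᵥ P y) := by
          simp only [dotProduct, Finset.mul_sum]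
          refine Finset.sum_congr rfl fun i _ => ?_
          simp only [Pi.mul_apply, Pi.smul_apply, Pi.pow_apply, smul_eq_mul]
          ring
        rw [hPs, hPp, e2, hPs, hPb, smul_dotProduct, smul_eq_mul]
        ring
      rw [ContinuousMap.add_apply, dotProduct_add, hΘκ, hP0, postcomp_apply,
        ContinuousMap.mul_apply, postcomp_apply, harmonic1_coe, smul_zero, add_zero, e1,
        harmonic2_coe, dotProduct_add, dotProduct_add, dotProduct_smul, dotProduct_smul,
        smul_eq_mul, smul_eq_mul]
      ring
    simp only [hν] at hsol
    rw [integral_cubic_forcing] at hsol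
    have hpi := Real.pi_pos
    have hneg : (1 + α) * (3 * κ / 8) + 2 * ((1 + α) * (b ⬝ᵥ u0 + b ⬝ᵥ u2 / 2)
        + (ω ^ 2 - α) / (2 * ω) * (b ⬝ᵥ v2)) < 0 := by
      by_cases hb' : b = 0
      · have := hκ0 hb'
        nlinarith
      · have := hJ' hb'
        nlinarith
    have hval : pairAtZero p (resolvent1 (V 0).2) = -2 * ((1 + α) * (3 * κ / 8)
        + 2 * ((1 + α) * (b ⬝ᵥ u0 + b ⬝ᵥ u2 / 2) + (ω ^ 2 - α) / (2 * ω) * (b ⬝ᵥ v2))) := by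
      have h0 : pairAtZero p (resolvent1 (V 0).2) * ω + 2 * ((1 + α) * ω * (3 * κ / 8
          + 2 * (b ⬝ᵥ u0) + b ⬝ᵥ u2) + (ω ^ 2 - α) * (b ⬝ᵥ v2)) = 0 := by
        refine (mul_eq_zero.1 (?_ : Real.pi * _ = 0)).resolve_left hpi.ne'
        linear_combination hsol
      have h1 : (ω ^ 2 - α) / (2 * ω) * (b ⬝ᵥ v2) * ω = (ω ^ 2 - α) * (b ⬝ᵥ v2) / 2 := by
        field_simp
      refine mul_right_cancel₀ hω.ne' ?_
      linear_combination h0 + 4 * h1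
    exact lt_of_lt_of_eq (by linarith) hval.symm
  · simp
  · filter_upwards [hV1.eventually (by simp)] with r hr
    have := hr.continuousAt
    refine ⟨?_, ?_, ?_, ?_⟩ <;> fun_prop
  · exact ((hasDerivAt_harmonic1 p 0 t).congr_deriv (by simp)).add
      ((hasDerivAt_harmonic2 u0 u2 v2 t).const_smul r) |>.add
      ((hasDerivAt_resolvent1 (V r).1 t).const_smul (r ^ 2))
  · exact ((hasDerivAt_harmonic1 (α • p) (ω • p) t).add
      ((hasDerivAt_harmonic2 w0 w2 z2 t).const_smul r)).add
      ((hasDerivAt_resolvent1 (V r).2 t).const_smul (r ^ 2))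

end HopfBranch

section SoftmaxExpansion

open scoped Topology

variable {X : Type*} [NormedCommRing X] [NormedAlgebra ℝ X]

theorem expTail_zero [CompleteSpace X] : expTail (0 : X) = (1 / 6 : ℝ) • (1 : X) := by
  have h := hasSum_single (f := fun n : ℕ => (((n + 3).factorial : ℝ))⁻¹ • (0 : X) ^ n) 0
    fun n hn => by simp [hn]
  rw [(hasSum_expTail (0 : X)).unique h]
  norm_num [Nat.factorial]

/-- The cubic term `(P s)³ e₃(r P s)` in the
expansion of `exp (r P s)`. -/
noncomputable def expCubic (P : X →L[ℝ] X) (y : ℝ × X) : X := P y.2 ^ 3 * expTail (y.1 • P y.2)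

/-- `(E exp(r P s) - 1) / r²`. -/
noncomputable def softmaxMean (E P : X →L[ℝ] X) (y : ℝ × X) : X :=
  E ((1 / 2 : ℝ) • P y.2 ^ 2 + y.1 • expCubic P y)

/-- `P exp(r P s) / r`. -/
noncomputable def softmaxNumerator (P : X →L[ℝ] X) (y : ℝ × X) : X :=
  P y.2 + (y.1 / 2) • P (P y.2 ^ 2) + y.1 ^ 2 • P (expCubic P y)

/-- The remainder of order at least three in the expansion of the softmax
`P exp(r P s) / E exp(r P s)`. -/
noncomputable def softmaxRemainder (E P : X →L[ℝ] X) (y : ℝ × X) : X :=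
  P (expCubic P y) - softmaxNumerator P y * softmaxMean E P y *
    Ring.inverse (1 + y.1 ^ 2 • softmaxMean E P y)

variable {E P : X →L[ℝ] X}

theorem contDiff_expCubic [CompleteSpace X] : ContDiff ℝ 1 (expCubic P) := by
  have h : ContDiff ℝ 1 (fun y : ℝ × X => expTail (y.1 • P y.2)) :=
    contDiff_expTail.comp (by fun_prop)
  unfold expCubic
  fun_prop

theorem contDiff_softmaxMean [CompleteSpace X] : ContDiff ℝ 1 (softmaxMean E P) := by
  have h := contDiff_expCubic (P := P)
  unfold softmaxMean
  fun_prop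

theorem contDiffAt_softmaxRemainder [CompleteSpace X] (s : X) :
    ContDiffAt ℝ 1 (softmaxRemainder E P) (0, s) := by
  have h1 : ContDiffAt ℝ 1 (expCubic P) (0, s) := contDiff_expCubic.contDiffAt
  have h2 : ContDiffAt ℝ 1 (softmaxMean E P) (0, s) := contDiff_softmaxMean.contDiffAt
  have h3 : ContDiffAt ℝ 1 (fun y : ℝ × X => 1 + y.1 ^ 2 • softmaxMean E P y) (0, s) := by
    fun_prop
  have h4 : ContDiffAt ℝ 1 (fun y : ℝ × X => Ring.inverse (1 + y.1 ^ 2 • softmaxMean E P y))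
      (0, s) := by
    refine ContDiffAt.comp (0, s) (g := Ring.inverse) ?_ h3
    have h := contDiffAt_ringInverse ℝ (n := 1) (1 : Xˣ)
    simpa using h
  unfold softmaxRemainder softmaxNumerator
  fun_prop

theorem softmaxRemainder_zero [CompleteSpace X] (s : X) :
    softmaxRemainder E P (0, s) =
      (1 / 6 : ℝ) • P (P s ^ 3) - (1 / 2 : ℝ) • (P s * E (P s ^ 2)) := by
  simp [softmaxRemainder, softmaxNumerator, softmaxMean, expCubic, expTail_zero]

theorem eventually_isUnit_one_add_softmaxMean [CompleteSpace X] {s : ℝ → X}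
    (hs : ContinuousAt s 0) :
    ∀ᶠ r in 𝓝 0, IsUnit (1 + r ^ 2 • softmaxMean E P (r, s r)) := by
  have h1 : ContinuousAt (fun r : ℝ => softmaxMean E P (r, s r)) 0 :=
    (contDiff_softmaxMean (E := E) (P := P)).continuous.continuousAt.comp
      (f := fun r : ℝ => (r, s r)) (continuousAt_id.prodMk hs)
  have h2 : ContinuousAt (fun r : ℝ => 1 + r ^ 2 • softmaxMean E P (r, s r)) 0 := by fun_prop
  refine h2.eventually_mem (Units.isOpen.mem_nhds ?_)
  simp

theorem map_softmaxRemainder (hE1 : E 1 = 1) (hE : ∀ u w, E (u * E w) = E u * E w)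
    (hP : ∀ u, P u = u - E u) {y : ℝ × X} (hy : IsUnit (1 + y.1 ^ 2 • softmaxMean E P y)) :
    E (softmaxRemainder E P y) = 0 := by
  have hEE : ∀ u, E (E u) = E u := fun u => by simpa [hE1] using hE 1 u
  have hEP : ∀ u, E (P u) = 0 := fun u => by rw [hP, map_sub, hEE, sub_self]
  obtain ⟨w, hw⟩ : ∃ w, softmaxMean E P y = E w := ⟨_, rfl⟩
  obtain ⟨z, hz⟩ : ∃ z, Ring.inverse (1 + y.1 ^ 2 • softmaxMean E P y) = z := ⟨_, rfl⟩
  have hz1 := Ring.inverse_mul_cancel _ hy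
  rw [hz] at hz1
  have hzE : E z = z := by
    have h1 : 1 + y.1 ^ 2 • softmaxMean E P y = E (1 + y.1 ^ 2 • w) := by
      rw [map_add, hE1, map_smul, hw]
    have h2 : E z * E (1 + y.1 ^ 2 • w) = 1 := by rw [← hE, ← h1, hz1, hE1]
    rw [h1] at hz1 hy
    exact hy.mul_right_cancel (h2.trans hz1.symm)
  have hN : E (softmaxNumerator P y) = 0 := by simp [softmaxNumerator, hEP]
  rw [softmaxRemainder, map_sub, hEP, hz, hw, ← hzE, hE, hE, hN]
  simp

theorem rescaledNonlinearity_softmaxRemainder_mul {r : ℝ} {s : X} (hs : P s = s)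
    (hu : IsUnit (1 + r ^ 2 • softmaxMean E P (r, s))) :
    rescaledNonlinearity P (softmaxRemainder E P) r s * (1 + r ^ 2 • softmaxMean E P (r, s)) =
      softmaxNumerator P (r, s) := by
  have h1 := Ring.inverse_mul_cancel _ hu
  have h2 : rescaledNonlinearity P (softmaxRemainder E P) r s = softmaxNumerator P (r, s)
      - r ^ 2 • (softmaxNumerator P (r, s) * softmaxMean E P (r, s) *
        Ring.inverse (1 + r ^ 2 • softmaxMean E P (r, s))) := by
    simp only [rescaledNonlinearity, softmaxRemainder]
    generalize softmaxNumerator P (r, s) * softmaxMean E P (r, s) *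
      Ring.inverse (1 + r ^ 2 • softmaxMean E P (r, s)) = q
    simp only [softmaxNumerator, hs]
    module
  rw [h2, sub_mul, smul_mul_assoc, mul_assoc _ (Ring.inverse _), h1, mul_add, mul_one,
    mul_one, mul_smul_comm, add_sub_cancel_right]

end SoftmaxExpansion

section BlockMean

/-- The blockwise mean on `ℝ^{mn}`. -/
noncomputable def blockMean (n m : ℕ) : (Fin n × Fin m → ℝ) →L[ℝ] (Fin n × Fin m → ℝ) :=
  LinearMap.toContinuousLinearMap
    { toFun := fun v p => (∑ l, v (p.1, l)) / m
      map_add' := fun u v => by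
        ext p
        simp [Finset.sum_add_distrib, add_div]
      map_smul' := fun c v => by
        ext p
        simp [← Finset.mul_sum, mul_div_assoc] }

/-- The complement of the blockwise mean. -/
noncomputable def blockProj (n m : ℕ) : (Fin n × Fin m → ℝ) →L[ℝ] (Fin n × Fin m → ℝ) :=
  1 - blockMean n m

variable {n m : ℕ}

theorem blockMean_apply (v : Fin n × Fin m → ℝ) (p : Fin n × Fin m) :
    blockMean n m v p = (∑ l, v (p.1, l)) / m := rfl

theorem blockProj_apply (v : Fin n × Fin m → ℝ) : blockProj n m v = v - blockMean n m v := rfl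

theorem blockMean_one (hm : m ≠ 0) : blockMean n m 1 = 1 := by
  ext p
  simp [blockMean_apply, hm]

theorem blockMean_mul (u w : Fin n × Fin m → ℝ) :
    blockMean n m (u * blockMean n m w) = blockMean n m u * blockMean n m w := by
  ext p
  simp only [blockMean_apply, Pi.mul_apply, ← Finset.sum_mul]
  ring

theorem dotProduct_blockMean (u v : Fin n × Fin m → ℝ) :
    u ⬝ᵥ blockMean n m v = blockMean n m u ⬝ᵥ v := by
  simp only [dotProduct, blockMean_apply, Fintype.sum_prod_type, div_mul_eq_mul_div, mul_div_assoc',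
    ← Finset.sum_div, ← Finset.mul_sum, ← Finset.sum_mul]

theorem dotProduct_blockProj (u v : Fin n × Fin m → ℝ) :
    u ⬝ᵥ blockProj n m v = blockProj n m u ⬝ᵥ v := by
  rw [blockProj_apply, blockProj_apply, dotProduct_sub, sub_dotProduct, dotProduct_blockMean]

theorem blockMean_blockProj (hm : m ≠ 0) (v : Fin n × Fin m → ℝ) :
    blockMean n m (blockProj n m v) = 0 := by
  have h : blockMean n m (blockMean n m v) = blockMean n m v := by
    simpa [blockMean_one hm] using blockMean_mul 1 v
  rw [blockProj_apply, map_sub, h, sub_self]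

theorem blockProj_eq_self_iff {v : Fin n × Fin m → ℝ} :
    blockProj n m v = v ↔ blockMean n m v = 0 := by
  rw [blockProj_apply, sub_eq_self]

theorem expCubic_apply (P : (Fin n × Fin m → ℝ) →L[ℝ] (Fin n × Fin m → ℝ)) (r : ℝ)
    (s : C(Circ, Fin n × Fin m → ℝ)) (θ : Circ) (p : Fin n × Fin m) :
    expCubic (postcomp P) (r, s) θ p = P (s θ) p ^ 3 * expTail (r * P (s θ) p) := by
  have h := map_expTail ((Pi.evalAlgHom ℝ (fun _ : Fin n × Fin m => ℝ) p).comp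
    (ContinuousMap.evalAlgHom ℝ (Fin n × Fin m → ℝ) θ))
    ((continuous_apply p).comp (continuous_eval_const θ)) (r • postcomp P s)
  simp only [AlgHom.comp_apply, Pi.evalAlgHom_apply, ContinuousMap.evalAlgHom_apply,
    ContinuousMap.smul_apply, postcomp_apply, Pi.smul_apply, smul_eq_mul] at h
  simp [expCubic, h]

theorem smul_rescaledNonlinearity_eq_fbar (hm : m ≠ 0) {r : ℝ}
    {s : C(Circ, Fin n × Fin m → ℝ)} (hs : ∀ θ, blockMean n m (s θ) = 0)
    (hu : IsUnit (1 + r ^ 2 • softmaxMean (postcomp (blockMean n m)) (postcomp (blockProj n m))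
      (r, s))) (θ : Circ) :
    r • rescaledNonlinearity (postcomp (blockProj n m))
      (softmaxRemainder (postcomp (blockMean n m)) (postcomp (blockProj n m))) r s θ =
      (m : ℝ) • fbar n m (r • s θ) := by
  have hsP : ∀ θ, blockProj n m (s θ) = s θ := fun θ => blockProj_eq_self_iff.2 (hs θ)
  have hPs : postcomp (blockProj n m) s = s := ContinuousMap.ext hsP
  have h := rescaledNonlinearity_softmaxRemainder_mul hPs hu
  have h := congrArg (fun f : C(Circ, Fin n × Fin m → ℝ) => f θ) h
  obtain ⟨c, hc⟩ : ∃ c, expCubic (postcomp (blockProj n m)) (r, s) θ = c := ⟨_, rfl⟩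
  have hexp : (fun p => Real.exp (r * s θ p)) =
      1 + r • s θ + (r ^ 2 / 2) • s θ ^ 2 + r ^ 3 • c := by
    ext p
    rw [Real.exp_eq_add_expTail, ← hc]
    simp only [Pi.add_apply, Pi.smul_apply, expCubic_apply, hsP, Pi.one_apply, Pi.pow_apply,
      smul_eq_mul]
    ring
  have hP1 : blockProj n m 1 = 0 := by rw [blockProj_apply, blockMean_one hm, sub_self]
  have hmean : blockMean n m (fun p => Real.exp (r * s θ p)) =
      1 + r ^ 2 • softmaxMean (postcomp (blockMean n m)) (postcomp (blockProj n m)) (r, s) θ := by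
    rw [hexp]
    simp only [softmaxMean, map_add, map_smul, blockMean_one hm, hs, postcomp_apply, hc,
      ContinuousMap.add_apply, ContinuousMap.smul_apply, ContinuousMap.pow_apply, hPs]
    module
  have hproj : blockProj n m (fun p => Real.exp (r * s θ p)) =
      r • softmaxNumerator (postcomp (blockProj n m)) (r, s) θ := by
    rw [hexp]
    simp only [softmaxNumerator, map_add, map_smul, hP1, hsP, postcomp_apply, hc,
      ContinuousMap.add_apply, ContinuousMap.smul_apply, ContinuousMap.pow_apply, hPs]
    module
  ext p
  have hp := congrFun h p
  have h1 := congrFun hmean p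
  have h2 := congrFun hproj p
  simp only [ContinuousMap.mul_apply, ContinuousMap.add_apply, ContinuousMap.one_apply,
    ContinuousMap.smul_apply, Pi.mul_apply, Pi.add_apply, Pi.one_apply, Pi.smul_apply,
    smul_eq_mul, blockProj_apply, Pi.sub_apply] at hp h1 h2
  rw [← h1] at hp
  rw [← hp] at h2
  rw [blockMean_apply] at h2
  have hm' : (m : ℝ) ≠ 0 := Nat.cast_ne_zero.2 hm
  have hpos : 0 < ∑ l, Real.exp (r * s θ (p.1, l)) :=
    Finset.sum_pos (fun _ _ => Real.exp_pos _)
      ⟨⟨0, Nat.pos_of_ne_zero hm⟩, Finset.mem_univ _⟩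
  simp only [Pi.smul_apply, smul_eq_mul, fbar, softmax]
  generalize rescaledNonlinearity (postcomp (blockProj n m))
      (softmaxRemainder (postcomp (blockMean n m)) (postcomp (blockProj n m))) r s θ p = y at h2 ⊢
  generalize (∑ l, Real.exp (r * s θ (p.1, l))) = z at *
  field_simp at h2 ⊢
  linear_combination -h2

end BlockMean

section WeightMatrix

theorem Matrix.IsHermitian.exists_eigenvectors {I : Type*} [Fintype I] [DecidableEq I]
    {A : Matrix I I ℝ} (hA : A.IsHermitian) :
    ∃ (e : I → I → ℝ) (x : I → ℝ), (∀ v : I → ℝ, v = ∑ i, (e i ⬝ᵥ v) • e i) ∧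
      (∀ i, A *ᵥ e i = x i • e i) ∧ ∀ i, e i ≠ 0 := by
  refine ⟨fun i => hA.eigenvectorBasis i, hA.eigenvalues, fun v => ?_,
    fun i => hA.mulVec_eigenvectorBasis i, fun i h => ?_⟩
  · have h := hA.eigenvectorBasis.sum_repr' (WithLp.toLp 2 v)
    have h := congrArg WithLp.ofLp h
    simp only [WithLp.ofLp_sum, WithLp.ofLp_smul] at h
    refine h.symm.trans (Finset.sum_congr rfl fun i _ => ?_)
    simp [EuclideanSpace.inner_eq_star_dotProduct, dotProduct_comm]
  · exact hA.eigenvectorBasis.orthonormal.ne_zero i (by ext j; exact congrFun h j)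

variable {n m : ℕ}

theorem Lam_mulVec (v : Fin n × Fin m → ℝ) :
    Lam n m *ᵥ v = (1 / (m : ℝ)) • blockProj n m v := by
  ext p
  simp only [Lam, mulVec, dotProduct, of_apply, Fintype.sum_prod_type, Pi.smul_apply, smul_eq_mul,
    blockProj_apply, Pi.sub_apply, blockMean_apply, ite_mul, zero_mul, sub_mul,
    Finset.sum_ite_irrel, Finset.sum_const_zero, Finset.sum_ite_eq, Finset.mem_univ, if_true,
    Finset.sum_sub_distrib, ← Finset.mul_sum]
  ring

theorem mulVec_blockMean {W : Matrix (Fin n × Fin m) (Fin n × Fin m) ℝ} {lam : Fin n → Fin n → ℝ}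
    (hW : W.IsSymm) (hrow : ∀ (i k : Fin n) (j : Fin m), ∑ l : Fin m, W (i, j) (k, l) = lam i k)
    (hlam : ∀ i k, lam i k = lam k i) (v : Fin n × Fin m → ℝ) :
    W *ᵥ blockMean n m v = blockMean n m (W *ᵥ v) := by
  ext p
  simp only [mulVec, dotProduct, blockMean_apply, Fintype.sum_prod_type]
  have h1 : ∀ k l, ∑ j, W (p.1, j) (k, l) = lam p.1 k := fun k l => by
    rw [hlam, ← hrow k p.1 l]
    exact Finset.sum_congr rfl fun j _ => hW.apply _ _
  have h2 : ∀ k, ∑ l, W p (k, l) = lam p.1 k := fun k => hrow p.1 k p.2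
  conv_rhs => rw [Finset.sum_comm, Finset.sum_div]
  refine Finset.sum_congr rfl fun k _ => ?_
  rw [← Finset.sum_mul, h2, Finset.sum_comm, mul_div_assoc', Finset.mul_sum]
  simp only [← Finset.sum_mul, h1]

/-- The matrix `W` restricted to vectors of blockwise mean zero. -/
noncomputable def weightOp (W : Matrix (Fin n × Fin m) (Fin n × Fin m) ℝ) :
    (Fin n × Fin m → ℝ) →L[ℝ] (Fin n × Fin m → ℝ) :=
  (LinearMap.toContinuousLinearMap W.mulVecLin).comp (blockProj n m)

theorem weightOp_apply (W : Matrix (Fin n × Fin m) (Fin n × Fin m) ℝ) (v : Fin n × Fin m → ℝ) :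
    weightOp W v = W *ᵥ blockProj n m v := rfl

theorem mul_Lam_mulVec (W : Matrix (Fin n × Fin m) (Fin n × Fin m) ℝ) (v : Fin n × Fin m → ℝ) :
    (W * Lam n m) *ᵥ v = (1 / (m : ℝ)) • weightOp W v := by
  rw [← mulVec_mulVec, Lam_mulVec, mulVec_smul, weightOp_apply]

variable {W : Matrix (Fin n × Fin m) (Fin n × Fin m) ℝ}

theorem blockMean_weightOp (hm : m ≠ 0)
    (hc : ∀ v, W *ᵥ blockMean n m v = blockMean n m (W *ᵥ v)) (v : Fin n × Fin m → ℝ) :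
    blockMean n m (weightOp W v) = 0 := by
  rw [weightOp_apply, ← hc, blockMean_blockProj hm, mulVec_zero]

theorem dotProduct_weightOp (hW : W.IsSymm)
    (hc : ∀ v, W *ᵥ blockMean n m v = blockMean n m (W *ᵥ v)) (u v : Fin n × Fin m → ℝ) :
    u ⬝ᵥ weightOp W v = weightOp W u ⬝ᵥ v := by
  have h : ∀ v, W *ᵥ blockProj n m v = blockProj n m (W *ᵥ v) := fun v => by
    rw [blockProj_apply, blockProj_apply, mulVec_sub, hc]
  rw [weightOp_apply, weightOp_apply, dotProduct_mulVec, ← mulVec_transpose, hW.eq,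
    dotProduct_blockProj, h]

theorem exists_weightOp_eigenvectors (hm : m ≠ 0) (hW : W.IsSymm)
    (hc : ∀ v, W *ᵥ blockMean n m v = blockMean n m (W *ᵥ v))
    (hmax : ∀ x : ℝ, Module.End.HasEigenvalue (toLin' (W * Lam n m)) x → x ≤ 1 / m)
    (hsimple : Module.finrank ℝ (Module.End.eigenspace (toLin' (W * Lam n m)) (1 / m)) = 1)
    {p : Fin n × Fin m → ℝ} (hp0 : p ≠ 0) (hp : weightOp W p = p) :
    ∃ (e : Fin n × Fin m → Fin n × Fin m → ℝ) (x : Fin n × Fin m → ℝ),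
      (∀ v : Fin n × Fin m → ℝ, v = ∑ i, (e i ⬝ᵥ v) • e i) ∧
      (∀ i, weightOp W (e i) = x i • e i) ∧ (∀ i, x i ≤ 1) ∧
      ∀ i, x i < 1 ∨ ∃ c : ℝ, e i = c • p := by
  have hm' : (0 : ℝ) < m := by positivity
  have hherm : ((m : ℝ) • (W * Lam n m)).IsHermitian := by
    ext i j
    have h := dotProduct_weightOp hW hc (Pi.single i 1) (Pi.single j 1)
    have hw : ∀ v, weightOp W v = ((m : ℝ) • (W * Lam n m)) *ᵥ v := fun v => by
      rw [smul_mulVec, mul_Lam_mulVec, smul_smul, mul_one_div_cancel hm'.ne', one_smul]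
    rw [hw, hw] at h
    simpa using h.symm
  obtain ⟨e, x, h1, h2, h3⟩ := hherm.exists_eigenvectors
  have h4 : ∀ i, weightOp W (e i) = x i • e i := fun i => by
    rw [← h2, smul_mulVec, mul_Lam_mulVec, smul_smul, mul_one_div_cancel hm'.ne', one_smul]
  have h5 : ∀ (y : ℝ) v, weightOp W v = y • v →
      v ∈ Module.End.eigenspace (toLin' (W * Lam n m)) (y / m) := fun y v hv => by
    rw [Module.End.mem_eigenspace_iff, toLin'_apply, mul_Lam_mulVec, hv, smul_smul]
    congr 1
    ring
  have h6 : ∀ i, x i ≤ 1 := fun i => by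
    have := hmax _ (Module.End.hasEigenvalue_of_hasEigenvector ⟨h5 _ _ (h4 i), h3 i⟩)
    rwa [div_le_div_iff_of_pos_right hm'] at this
  refine ⟨e, x, h1, h4, h6, fun i => ?_⟩
  refine (h6 i).lt_or_eq.imp_right fun hi => ?_
  have hpm := h5 1 p (by rw [hp, one_smul])
  have hem := h5 (x i) (e i) (h4 i)
  rw [hi] at hem
  obtain ⟨c, hc⟩ := (finrank_eq_one_iff_of_nonzero' (⟨p, hpm⟩ : Module.End.eigenspace _ _)
    (by simpa using hp0)).1 hsimple ⟨e i, hem⟩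
  exact ⟨c, (congrArg Subtype.val hc).symm⟩

end WeightMatrix

section CubicCoefficient

variable {n m : ℕ} {p : Fin n × Fin m → ℝ}

theorem dotProduct_softmaxRemainder_harmonic1 (hp : blockMean n m p = 0) (t : ℝ) :
    p ⬝ᵥ softmaxRemainder (postcomp (blockMean n m)) (postcomp (blockProj n m))
        (0, harmonic1 p 0) (t : Circ) =
      ((p ⬝ᵥ p ^ 3) / 6 - (p ⬝ᵥ (p * blockMean n m (p ^ 2))) / 2) * Real.cos t ^ 3 := by
  have hPp := blockProj_eq_self_iff.2 hp
  have h1 : (Real.cos t • p) ^ 3 = Real.cos t ^ 3 • p ^ 3 := smul_pow _ _ _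
  have h2 : (Real.cos t • p) ^ 2 = Real.cos t ^ 2 • p ^ 2 := smul_pow _ _ _
  rw [softmaxRemainder_zero]
  simp only [ContinuousMap.sub_apply, ContinuousMap.smul_apply, ContinuousMap.mul_apply,
    ContinuousMap.pow_apply, postcomp_apply, harmonic1_coe, smul_zero, add_zero, map_smul, hPp,
    h1, h2, dotProduct_sub, dotProduct_smul, smul_mul_smul_comm, dotProduct_blockProj, smul_eq_mul]
  ring

theorem dotProduct_cube (p : Fin n × Fin m → ℝ) :
    p ⬝ᵥ p ^ 3 = ∑ r, ∑ t, p (r, t) ^ 4 := by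
  simp only [dotProduct, Fintype.sum_prod_type, Pi.pow_apply]
  exact Finset.sum_congr rfl fun r _ => Finset.sum_congr rfl fun t _ => by ring

theorem dotProduct_mul_blockMean_sq (p : Fin n × Fin m → ℝ) :
    p ⬝ᵥ (p * blockMean n m (p ^ 2)) = (∑ r, (∑ t, p (r, t) ^ 2) ^ 2) / m := by
  simp only [dotProduct, Fintype.sum_prod_type, Pi.pow_apply, Pi.mul_apply, blockMean_apply]
  rw [Finset.sum_div]
  refine Finset.sum_congr rfl fun r _ => ?_
  simp only [← mul_assoc, ← pow_two, ← Finset.sum_mul]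
  ring

theorem cubicCoefficient_neg (hp0 : p ≠ 0) (hp : blockProj n m (p ^ 2) = 0) :
    (p ⬝ᵥ p ^ 3) / 6 - (p ⬝ᵥ (p * blockMean n m (p ^ 2))) / 2 < 0 := by
  rw [blockProj_apply, sub_eq_zero] at hp
  rw [← hp, ← pow_succ']
  have h : 0 < p ⬝ᵥ p ^ 3 := by
    rw [dotProduct_cube, ← Fintype.sum_prod_type']
    obtain ⟨i, hi⟩ := Function.ne_iff.1 hp0
    refine Finset.sum_pos' (fun j _ => by positivity) ⟨i, Finset.mem_univ _, ?_⟩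
    have : p i ≠ 0 := hi
    positivity
  norm_num
  linarith

theorem blockProj_sq_eq_zero_of_two {p : Fin n × Fin 2 → ℝ} (hp : blockMean n 2 p = 0) :
    blockProj n 2 (p ^ 2) = 0 := by
  ext ⟨r, t⟩
  have h := congrFun hp (r, 0)
  simp only [blockMean_apply, Fin.sum_univ_two, Pi.zero_apply] at h
  have h' : p (r, 1) = -p (r, 0) := by
    push_cast at h
    linarith
  simp only [blockProj_apply, Pi.sub_apply, blockMean_apply, Fin.sum_univ_two, Pi.pow_apply, h',
    Pi.zero_apply]
  fin_cases t <;> simp [h']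

theorem cubicCoefficient_nonpos
    (h : ∑ r, ∑ t, p (r, t) ^ 4 ≤ (3 / m) * ∑ r, (∑ t, p (r, t) ^ 2) ^ 2) :
    (p ⬝ᵥ p ^ 3) / 6 - (p ⬝ᵥ (p * blockMean n m (p ^ 2))) / 2 ≤ 0 := by
  rw [dotProduct_cube, dotProduct_mul_blockMean_sq]
  rw [div_mul_eq_mul_div, mul_div_assoc] at h
  linarith

theorem cubicCoefficient_nonpos_of_three {p : Fin n × Fin 3 → ℝ} (hp : blockMean n 3 p = 0) :
    (p ⬝ᵥ p ^ 3) / 6 - (p ⬝ᵥ (p * blockMean n 3 (p ^ 2))) / 2 ≤ 0 := by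
  refine cubicCoefficient_nonpos ?_
  have h : ∀ r, ∑ t, p (r, t) ^ 4 = (∑ t, p (r, t) ^ 2) ^ 2 / 2 := fun r => by
    have h := congrFun hp (r, 0)
    simp only [blockMean_apply, Fin.sum_univ_three, Pi.zero_apply] at h ⊢
    have h' : p (r, 2) = -p (r, 0) - p (r, 1) := by
      push_cast at h
      linarith
    rw [h']
    ring
  simp only [h, ← Finset.sum_div]
  have : 0 ≤ ∑ r, (∑ t, p (r, t) ^ 2) ^ 2 := Finset.sum_nonneg fun r _ => sq_nonneg _
  push_cast
  linarith

end CubicCoefficient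

section SmallOrbits

open scoped Topology

theorem exists_small_periodic_orbits {I : Type*} [Fintype I] {α : ℝ}
    {A B : (I → ℝ) → I → ℝ} {w h : ℝ → ℝ} {s a ds da : ℝ → C(Circ, I → ℝ)}
    (hw : ContinuousAt w 0) (hw0 : 0 < w 0) (hs : ContinuousAt s 0) (ha : ContinuousAt a 0)
    (hh : ∀ᶠ r in 𝓝 0, ContinuousAt h r) (hh0 : ∀ᶠ r in 𝓝 0, 0 < r → h 0 < h r)
    (hds : ∀ r (t : ℝ), HasDerivAt (fun t : ℝ => s r (t : Circ)) (ds r (t : Circ)) t)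
    (hda : ∀ r (t : ℝ), HasDerivAt (fun t : ℝ => a r (t : Circ)) (da r (t : Circ)) t)
    (heq : ∀ᶠ r in 𝓝 0, ∀ θ,
      w r • r • ds r θ = h r • A (r • s r θ) - r • s r θ - r • a r θ ∧
      w r • r • da r θ = B (r • s r θ) - α • r • a r θ)
    (hne : s 0 ((0 : ℝ) : Circ) ≠ s 0 (Real.pi : Circ)) :
    ∀ ε > (0 : ℝ), ∃ δ > (0 : ℝ), ∀ μ ∈ Set.Ioo (h 0) (h 0 + δ),
      ∃ (sb ab : ℝ → I → ℝ) (T : ℝ), 0 < T ∧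
        (∀ t, HasDerivAt sb (μ • A (sb t) - sb t - ab t) t) ∧
        (∀ t, HasDerivAt ab (B (sb t) - α • ab t) t) ∧
        (∀ t, sb (t + T) = sb t ∧ ab (t + T) = ab t) ∧
        (∃ t, sb t ≠ sb 0 ∨ ab t ≠ ab 0) ∧
        (∀ t, (∑ p, sb t p ^ 2) + (∑ p, ab t p ^ 2) < ε ^ 2) := by
  intro ε hε
  obtain ⟨N, hN⟩ : ∃ N : ℝ, N = (Fintype.card I : ℝ) := ⟨_, rfl⟩
  have hN0 : 0 ≤ N := hN ▸ Nat.cast_nonneg _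
  obtain ⟨η, hη⟩ : ∃ η, η = ε / (2 * (N + 1)) := ⟨_, rfl⟩
  have hη0 : 0 < η := by rw [hη]; positivity
  have hηN : N * η ^ 2 + N * η ^ 2 < ε ^ 2 := by
    have h1 : η * (2 * (N + 1)) = ε := by rw [hη]; field_simp
    rw [← h1]
    have : 0 < η ^ 2 := by positivity
    nlinarith [mul_nonneg hN0 hN0]
  have hsmall : ∀ {u : ℝ → C(Circ, I → ℝ)}, ContinuousAt u 0 → ∀ᶠ r in 𝓝 0, ‖r • u r‖ < η := by
    intro u hu
    have h1 : ContinuousAt (fun r => ‖r • u r‖) 0 := by fun_prop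
    exact h1.eventually_lt continuousAt_const (by simpa using hη0)
  have hne' : ∀ᶠ r in 𝓝 0, s r ((0 : ℝ) : Circ) ≠ s r (Real.pi : Circ) := by
    have h1 : ∀ θ, ContinuousAt (fun r => s r θ) 0 := fun θ =>
      (continuous_eval_const θ).continuousAt.comp hs
    exact ((h1 _).ne_iff_eventually_ne (h1 _)).1 hne
  have hwpos : ∀ᶠ r in 𝓝 0, 0 < w r := continuousAt_const.eventually_lt hw hw0
  obtain ⟨ρ, hρ, hall⟩ := Metric.eventually_nhds_iff.1
    (hh.and (hh0.and (heq.and (hne'.and (hwpos.and ((hsmall hs).and (hsmall ha)))))))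
  have hdist : ∀ {r : ℝ}, 0 ≤ r → r ≤ ρ / 2 → dist r 0 < ρ := fun h0 h1 => by
    rw [Real.dist_0_eq_abs, abs_of_nonneg h0]
    linarith
  have hρ2 : 0 < ρ / 2 := by positivity
  refine ⟨h (ρ / 2) - h 0, sub_pos.2 ((hall (hdist hρ2.le le_rfl)).2.1 hρ2), fun μ hμ => ?_⟩
  rw [add_sub_cancel] at hμ
  obtain ⟨r, hr, rfl⟩ := intermediate_value_Ioo hρ2.le
    (fun r hr => (hall (hdist hr.1 hr.2)).1.continuousWithinAt) hμ
  obtain ⟨-, -, h3, h4, h5, h6, h7⟩ := hall (hdist hr.1.le hr.2.le)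
  have hlin : ∀ t, HasDerivAt (fun t => w r * t) (w r) t := fun t => by
    simpa using (hasDerivAt_id t).const_mul (w r)
  have hper : ∀ t, ((w r * (t + 2 * Real.pi / w r) : ℝ) : Circ) = ((w r * t : ℝ) : Circ) := by
    intro t
    rw [mul_add, mul_div_cancel₀ _ h5.ne', coe_add_two_pi]
  have hsum : ∀ {u : C(Circ, I → ℝ)}, ‖r • u‖ < η → ∀ θ, ∑ p, (r • u θ) p ^ 2 ≤ N * η ^ 2 := by
    intro u hu θ
    rw [hN, ← nsmul_eq_mul, ← Finset.card_univ]
    refine Finset.sum_le_card_nsmul _ _ _ fun p _ => ?_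
    have h8 : ‖(r • u θ) p‖ ≤ η :=
      ((norm_le_pi_norm _ p).trans ((r • u).norm_coe_le_norm θ)).trans hu.le
    rw [← sq_abs]
    exact pow_le_pow_left₀ (abs_nonneg _) h8 2
  refine ⟨fun t => r • s r ((w r * t : ℝ) : Circ), fun t => r • a r ((w r * t : ℝ) : Circ),
    2 * Real.pi / w r, by positivity, fun t => ?_, fun t => ?_, fun t => ?_,
    ⟨Real.pi / w r, Or.inl fun h8 => ?_⟩, fun t => ?_⟩
  · rw [← (h3 _).1, smul_comm]
    exact ((hds r (w r * t)).scomp t (hlin t)).const_smul r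
  · rw [← (h3 _).2, smul_comm]
    exact ((hda r (w r * t)).scomp t (hlin t)).const_smul r
  · simp only [hper, and_self]
  · have h9 := smul_right_injective _ hr.1.ne' h8
    rw [mul_div_cancel₀ _ h5.ne', mul_zero] at h9
    exact h4 h9.symm
  · exact (add_le_add (hsum h6 _) (hsum h7 _)).trans_lt hηN

end SmallOrbits

section MeanZero

theorem blockMean_eq_zero_of_cycle {n m : ℕ} (hm : m ≠ 0) {w h g α : ℝ} (hw : 0 < w) (hα : 0 < α)
    (hg : 0 < g) {W : Matrix (Fin n × Fin m) (Fin n × Fin m) ℝ}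
    (hc : ∀ v, W *ᵥ blockMean n m v = blockMean n m (W *ᵥ v))
    {s a ds da Φ : C(Circ, Fin n × Fin m → ℝ)}
    (hds : ∀ t : ℝ, HasDerivAt (fun t : ℝ => s (t : Circ)) (ds (t : Circ)) t)
    (hda : ∀ t : ℝ, HasDerivAt (fun t : ℝ => a (t : Circ)) (da (t : Circ)) t)
    (hs : w • ds = h • postcomp (weightOp W) Φ - s - a) (ha : w • da = g • Φ - α • a)
    (hΦ : postcomp (blockMean n m) Φ = postcomp (blockMean n m) s) (θ : Circ) :
    blockMean n m (s θ) = 0 := by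
  induction θ using QuotientAddGroup.induction_on with
  | H t =>
    ext p
    let c : (Fin n × Fin m → ℝ) →L[ℝ] ℝ := (ContinuousLinearMap.proj p).comp (blockMean n m)
    have hcW : ∀ v, c (weightOp W v) = 0 := fun v => congrFun (blockMean_weightOp hm hc v) p
    refine (eq_zero_of_periodic_of_stable (ω := w) (α := α) (β := -1) (g := g) (T := 2 * Real.pi)
      (ξ := fun t => c (s (t : Circ))) (η := fun t => c (a (t : Circ)))
      (ξ' := fun t => c (ds (t : Circ))) (η' := fun t => c (da (t : Circ)))
      hw (by linarith) (by linarith) hg (by positivity)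
      (fun t => c.hasFDerivAt.comp_hasDerivAt t (hds t))
      (fun t => c.hasFDerivAt.comp_hasDerivAt t (hda t)) (fun t => ?_) (fun t => ?_)
      (fun t => by simp only [coe_add_two_pi]) (fun t => by simp only [coe_add_two_pi]) t).1
    · have h1 := congrArg (fun f : C(Circ, Fin n × Fin m → ℝ) => c (f t)) hs
      simp only [ContinuousMap.smul_apply, ContinuousMap.sub_apply, postcomp_apply, map_smul,
        map_sub, hcW, smul_eq_mul] at h1
      linarith
    · have h1 := congrArg (fun f : C(Circ, Fin n × Fin m → ℝ) => c (f t)) ha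
      have h2 : c (Φ t) = c (s t) :=
        congrFun (congrArg (fun f : C(Circ, Fin n × Fin m → ℝ) => f t) hΦ) p
      simp only [ContinuousMap.smul_apply, ContinuousMap.sub_apply, map_smul,
        map_sub, h2, smul_eq_mul] at h1
      exact h1

theorem postcomp_blockMean_rescaledNonlinearity {n m : ℕ} (hm : m ≠ 0) {r : ℝ}
    {s : C(Circ, Fin n × Fin m → ℝ)}
    (hu : IsUnit (1 + r ^ 2 • softmaxMean (postcomp (blockMean n m)) (postcomp (blockProj n m))
      (r, s))) :
    postcomp (blockMean n m) (rescaledNonlinearity (postcomp (blockProj n m))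
      (softmaxRemainder (postcomp (blockMean n m)) (postcomp (blockProj n m))) r s) =
      postcomp (blockMean n m) s := by
  have h1 := map_softmaxRemainder (E := postcomp (blockMean n m)) (P := postcomp (blockProj n m))
    (ContinuousMap.ext fun θ => blockMean_one hm)
    (fun u w => ContinuousMap.ext fun θ => blockMean_mul _ _)
    (fun u => ContinuousMap.ext fun θ => rfl) (y := (r, s)) hu
  have h2 : ∀ u, postcomp (blockMean n m) (postcomp (blockProj n m) u) = 0 := fun u =>
    ContinuousMap.ext fun θ => blockMean_blockProj hm _
  simp only [rescaledNonlinearity, map_add, map_smul, h1, h2, smul_zero, add_zero]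

end MeanZero

/-- Existence part of Theorem 3 (Hopf bifurcation): under Assumptions 1–3 on the
normalized weight matrix `W̄₀` (with `1/m` the largest, simple, eigenvalue of `W̄₀Λ`,
whose eigenspace is not contained in `span{ε_k ⊗ 𝟙_m}`, with unit eigenvector `p₁`),
if `ḡ_a > mα²` and one of the cases (a), (b), (c) holds, then for every `ε > 0` there is
`δ > 0` such that for every `μ₁ ∈ (m(1+α), m(1+α)+δ)` the system
`s̄' = μ₁W̄₀ f̄(s̄) − s̄ − ā`, `ā' = ḡ_a f̄(s̄) − α ā` has a nonconstant periodic solution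
whose orbit lies in the open ball of radius `ε` about the origin. -/
theorem stmt13 (n m : ℕ) (hn : 1 ≤ n) (hm : 2 ≤ m)
    (α ga : ℝ) (hα : α ∈ Set.Ioo (0 : ℝ) 1)
    (W0 : Matrix (Fin n × Fin m) (Fin n × Fin m) ℝ)
    (lam : Fin n → Fin n → ℝ)
    (hsymm : W0.IsSymm)
    (hdiag : ∀ (i : Fin n) (j l : Fin m), W0 (i, j) (i, l) = 0)
    (hA2 : ∀ (i k : Fin n) (j : Fin m), ∑ l : Fin m, W0 (i, j) (k, l) = lam i k)
    (hA3 : ∀ i k : Fin n, lam i k = lam k i)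
    (hev : Module.End.HasEigenvalue (Matrix.toLin' (W0 * Lam n m)) (1 / m))
    (hmaxev : ∀ x : ℝ,
      Module.End.HasEigenvalue (Matrix.toLin' (W0 * Lam n m)) x → x ≤ 1 / m)
    (hsimple :
      Module.finrank ℝ (Module.End.eigenspace (Matrix.toLin' (W0 * Lam n m)) (1 / m)) = 1)
    (hnotin : ¬ Module.End.eigenspace (Matrix.toLin' (W0 * Lam n m)) (1 / m) ≤
      Submodule.span ℝ
        {v : Fin n × Fin m → ℝ | ∃ k : Fin n, v = fun p => if p.1 = k then 1 else 0})
    (p1 : Fin n × Fin m → ℝ)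
    (hp1 : (W0 * Lam n m).mulVec p1 = (1 / (m : ℝ)) • p1)
    (hp1unit : ∑ p : Fin n × Fin m, p1 p ^ 2 = 1)
    (hga0 : (m : ℝ) * α ^ 2 < ga)
    (hcase : m = 2 ∨ (m = 3 ∧ (m : ℝ) * (1 + α) ^ 2 ≤ ga) ∨
      (4 ≤ m ∧ (m : ℝ) * (1 + α) ^ 2 ≤ ga ∧
        (∑ r : Fin n, ∑ t : Fin m, p1 (r, t) ^ 4) ≤
          (3 / m) * ∑ r : Fin n, (∑ t : Fin m, p1 (r, t) ^ 2) ^ 2)) :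
    ∀ ε > (0 : ℝ), ∃ δ > (0 : ℝ), ∀ μ1 : ℝ,
      μ1 ∈ Set.Ioo ((m : ℝ) * (1 + α)) ((m : ℝ) * (1 + α) + δ) →
      ∃ (sb ab : ℝ → (Fin n × Fin m → ℝ)) (T : ℝ), 0 < T ∧
        (∀ t : ℝ, HasDerivAt sb (μ1 • W0.mulVec (fbar n m (sb t)) - sb t - ab t) t) ∧
        (∀ t : ℝ, HasDerivAt ab (ga • fbar n m (sb t) - α • ab t) t) ∧
        (∀ t : ℝ, sb (t + T) = sb t ∧ ab (t + T) = ab t) ∧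
        (∃ t : ℝ, sb t ≠ sb 0 ∨ ab t ≠ ab 0) ∧
        (∀ t : ℝ, (∑ p : Fin n × Fin m, sb t p ^ 2) +
            (∑ p : Fin n × Fin m, ab t p ^ 2) < ε ^ 2) := by
  obtain ⟨hα0, hα1⟩ := hα
  have hm0 : m ≠ 0 := by omega
  have hmR : (0 : ℝ) < m := by positivity
  have hc := mulVec_blockMean hsymm hA2 hA3
  have hMp : weightOp W0 p1 = p1 := by
    rw [mul_Lam_mulVec] at hp1
    exact smul_right_injective _ (one_div_pos.2 hmR).ne' hp1
  have hEp : blockMean n m p1 = 0 := by rw [← hMp, blockMean_weightOp hm0 hc]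
  have hpp : p1 ⬝ᵥ p1 = 1 := by simpa only [dotProduct, ← pow_two] using hp1unit
  have hp0 : p1 ≠ 0 := fun h => by simp [h] at hpp
  obtain ⟨e, x, he, hMe, hx1, hx⟩ :=
    exists_weightOp_eigenvectors hm0 hsymm hc hmaxev hsimple hp0 hMp
  obtain ⟨g, hg⟩ : ∃ g, g = ga / m := ⟨_, rfl⟩
  have hga : ga = g * m := by rw [hg, div_mul_cancel₀ _ hmR.ne']
  have hgα : α ^ 2 < g := by
    rw [hg, lt_div_iff₀ hmR, mul_comm]
    exact hga0
  obtain ⟨ω, hωdef⟩ : ∃ ω, ω = Real.sqrt (g - α ^ 2) := ⟨_, rfl⟩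
  have hω : 0 < ω := hωdef ▸ Real.sqrt_pos.2 (sub_pos.2 hgα)
  have hω2 : ω ^ 2 = g - α ^ 2 := by rw [hωdef, Real.sq_sqrt (sub_pos.2 hgα).le]
  have hgω : ω ^ 2 + α ^ 2 = g := by linarith
  have hlarge : (m : ℝ) * (1 + α) ^ 2 ≤ ga → 1 + 2 * α ≤ ω ^ 2 := fun h => by
    rw [hga, mul_comm] at h
    have := le_of_mul_le_mul_right h hmR
    linarith
  have hb : blockProj n m (p1 ^ 2) = 0 ∨ 1 + 2 * α ≤ ω ^ 2 := by
    rcases hcase with h | ⟨-, h⟩ | ⟨-, h, -⟩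
    · subst h
      exact Or.inl (blockProj_sq_eq_zero_of_two hEp)
    · exact Or.inr (hlarge h)
    · exact Or.inr (hlarge h)
  have hκ : (p1 ⬝ᵥ p1 ^ 3) / 6 - (p1 ⬝ᵥ (p1 * blockMean n m (p1 ^ 2))) / 2 ≤ 0 := by
    rcases hcase with h | ⟨h, -⟩ | ⟨-, -, h⟩
    · subst h
      exact (cubicCoefficient_neg hp0 (blockProj_sq_eq_zero_of_two hEp)).le
    · subst h
      exact cubicCoefficient_nonpos_of_three hEp
    · exact cubicCoefficient_nonpos h
  obtain ⟨c1, c2, s, a, ds, da, hc2, hs0, hcont, hds, hda, heq⟩ :=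
    exists_hopf_branch hω hα0 hα1 (dotProduct_weightOp hsymm hc) dotProduct_blockProj hMp
      (blockProj_eq_self_iff.2 hEp) hpp he hMe hx1 hx hb
      (contDiffAt_softmaxRemainder (E := postcomp (blockMean n m))
        (P := postcomp (blockProj n m)) (harmonic1 p1 0))
      (dotProduct_softmaxRemainder_harmonic1 hEp) hκ (cubicCoefficient_neg hp0)
  obtain ⟨hc1c, hc2c, hsc, hac⟩ := hcont.self_of_nhds
  have hw : ContinuousAt (fun r => ω + r ^ 2 * c1 r) 0 := by fun_prop
  have hsol := exists_small_periodic_orbits (α := α) (A := fun v => W0 *ᵥ fbar n m v)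
    (B := fun v => ga • fbar n m v) (w := fun r => ω + r ^ 2 * c1 r)
    (h := fun r => m * (1 + α + r ^ 2 * c2 r)) hw (by simpa using hω) hsc hac
    (hcont.mono fun r hr => by
      have := hr.2.1
      fun_prop)
    ((hc2c.eventually (lt_mem_nhds hc2)).mono fun r hr h0 => by
      have : 0 < m * (r ^ 2 * c2 r) := by positivity
      linarith)
    hds hda ?_ ?_
  · simpa using hsol
  · have hwpos : ∀ᶠ r in nhds (0 : ℝ), 0 < ω + r ^ 2 * c1 r :=
      continuousAt_const.eventually_lt hw (by simpa using hω)
    filter_upwards [heq, hwpos, eventually_isUnit_one_add_softmaxMean (E := postcomp (blockMean n m))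
      (P := postcomp (blockProj n m)) hsc] with r hr hwr hu θ
    have hE := postcomp_blockMean_rescaledNonlinearity hm0 hu
    have hEs := blockMean_eq_zero_of_cycle hm0 hwr hα0 (hgω ▸ by positivity) hc (hds r) (hda r)
      hr.1 (hgω ▸ hr.2) hE
    have hΦ := smul_rescaledNonlinearity_eq_fbar hm0 hEs hu θ
    have hPΦ : weightOp W0 (rescaledNonlinearity (postcomp (blockProj n m))
        (softmaxRemainder (postcomp (blockMean n m)) (postcomp (blockProj n m))) r (s r) θ) =
        W0 *ᵥ rescaledNonlinearity (postcomp (blockProj n m))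
        (softmaxRemainder (postcomp (blockMean n m)) (postcomp (blockProj n m))) r (s r) θ := by
      rw [weightOp_apply, blockProj_eq_self_iff.2]
      exact (congrArg (fun f : C(Circ, Fin n × Fin m → ℝ) => f θ) hE).trans (hEs θ)
    have h1 := congrArg (fun f : C(Circ, Fin n × Fin m → ℝ) => r • f θ) hr.1
    have h2 := congrArg (fun f : C(Circ, Fin n × Fin m → ℝ) => r • f θ) hr.2
    simp only [ContinuousMap.smul_apply, ContinuousMap.sub_apply, postcomp_apply, hPΦ, hgω]
      at h1 h2
    refine ⟨?_, ?_⟩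
    · have hW := mulVec_smul W0 (m : ℝ) (fbar n m (r • s r θ))
      rw [← hΦ, mulVec_smul] at hW
      rw [smul_comm, h1, mul_comm (m : ℝ), mul_smul, ← hW]
      module
    · rw [smul_comm, h2, hga, mul_smul, ← hΦ]
      module
  · rw [hs0, harmonic1_coe, harmonic1_coe]
    intro h
    simp only [Real.cos_zero, Real.cos_pi, smul_zero, add_zero, one_smul, neg_smul] at h
    exact hp0 (self_eq_neg.1 h)
end

section
/- Let W be a symmetric mn×mn real matrix with largest eigenvalue μ_max(W) < 2(1+α), let σ = 2(1+α) − μ_max(W) > 0, α ∈ (0,1), and suppose ḡ_a > 2α²(1+α)‖W‖²/σ², where ‖W‖ is the operator norm of W. Then the origin is a globally asymptotically stable equilibrium of system (7): it is Lyapunov stable, and every solution (s̄, ā) : [0, ∞) → ℝ^{mn} × ℝ^{mn} of system (7) satisfies (s̄(t), ā(t)) → (0, 0) as t → ∞. -/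
open scoped BigOperators
open Matrix

section BlockInequalities

variable {ι : Type*} [Fintype ι]

lemma two_mul_sq_sub_le_mul_log_sub_log {u v : ℝ} (hu : 0 < u) (hv : 0 < v) (huv : u + v ≤ 1) :
    2 * (u - v) ^ 2 ≤ (u - v) * (Real.log u - Real.log v) := by
  wlog h : v ≤ u generalizing u v
  · have := this hv hu (by linarith) (by linarith)
    nlinarith
  have h1 := Real.le_log_one_add_of_nonneg (x := u / v - 1)
    (by rw [sub_nonneg, le_div_iff₀ hv]; linarith)
  rw [add_sub_cancel, Real.log_div hu.ne' hv.ne'] at h1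
  have h2 : 2 * (u - v) ≤ 2 * (u / v - 1) / (u / v - 1 + 2) := by
    have : 2 * (u / v - 1) / (u / v - 1 + 2) = 2 * (u - v) / (u + v) := by
      rw [show u / v - 1 + 2 = (u + v) / v by field_simp; ring,
        show u / v - 1 = (u - v) / v by field_simp]
      field_simp
    rw [this, le_div_iff₀ (by positivity)]
    nlinarith
  nlinarith

lemma sum_exp_div_sum_exp [Nonempty ι] (x : ι → ℝ) :
    ∑ j, Real.exp (x j) / ∑ l, Real.exp (x l) = 1 := by
  have : 0 < ∑ l, Real.exp (x l) :=
    Finset.sum_pos (fun _ _ => Real.exp_pos _) Finset.univ_nonempty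
  rw [← Finset.sum_div, div_self this.ne']

lemma logSumExp_sub_log_card_sub_mean_nonneg [Nonempty ι] (x : ι → ℝ) :
    0 ≤ Real.log (∑ l, Real.exp (x l)) - Real.log (Fintype.card ι) -
      (∑ l, x l) / Fintype.card ι := by
  have hZ : 0 < ∑ l, Real.exp (x l) :=
    Finset.sum_pos (fun _ _ => Real.exp_pos _) Finset.univ_nonempty
  have hc : (0 : ℝ) < Fintype.card ι := by exact_mod_cast Fintype.card_pos
  have hf := sum_exp_div_sum_exp x
  set Z := ∑ l, Real.exp (x l)
  set c := Real.log Z - Real.log (Fintype.card ι) with hcdef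
  have hexp : ∀ j, Real.exp (x j - c) = Fintype.card ι * (Real.exp (x j) / Z) := by
    intro j
    rw [Real.exp_sub, hcdef, Real.exp_sub, Real.exp_log hZ, Real.exp_log hc]
    field_simp
  have h : ∑ j, (x j - c) ≤ ∑ j, (Fintype.card ι * (Real.exp (x j) / Z) - 1) :=
    Finset.sum_le_sum fun j _ => by linarith [Real.add_one_le_exp (x j - c), hexp j]
  simp only [Finset.sum_sub_distrib, ← Finset.mul_sum, hf, Finset.sum_const, Finset.card_univ,
    nsmul_eq_mul, mul_one, sub_self] at h
  rw [sub_nonneg, div_le_iff₀ hc]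
  linarith

lemma logSumExp_sub_log_card_sub_mean_le [Nonempty ι] (x : ι → ℝ) :
    Real.log (∑ l, Real.exp (x l)) - Real.log (Fintype.card ι) - (∑ l, x l) / Fintype.card ι ≤
      ∑ j, x j * (Real.exp (x j) / ∑ l, Real.exp (x l) - 1 / Fintype.card ι) := by
  have hZ : 0 < ∑ l, Real.exp (x l) :=
    Finset.sum_pos (fun _ _ => Real.exp_pos _) Finset.univ_nonempty
  have hc : (0 : ℝ) < Fintype.card ι := by exact_mod_cast Fintype.card_pos
  have hf := sum_exp_div_sum_exp x
  set Z := ∑ l, Real.exp (x l)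
  set c := Real.log Z - Real.log (Fintype.card ι) with hcdef
  have hexp : ∀ j, Real.exp (x j) / Z * Real.exp (c - x j) = 1 / Fintype.card ι := by
    intro j
    rw [Real.exp_sub, hcdef, Real.exp_sub, Real.exp_log hZ, Real.exp_log hc]
    field_simp
  have h : ∑ j, Real.exp (x j) / Z * (c - x j) ≤
      ∑ j, (1 / (Fintype.card ι : ℝ) - Real.exp (x j) / Z) := by
    refine Finset.sum_le_sum fun j _ => ?_
    have hp : 0 < Real.exp (x j) / Z := by positivity
    nlinarith [Real.add_one_le_exp (c - x j), hexp j]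
  have hcard : ∑ _j : ι, 1 / (Fintype.card ι : ℝ) = 1 := by
    rw [Finset.sum_const, Finset.card_univ, nsmul_eq_mul, mul_one_div_cancel hc.ne']
  rw [Finset.sum_sub_distrib, hf, hcard] at h
  simp only [mul_sub, Finset.sum_sub_distrib, ← Finset.sum_mul, hf] at h
  simp only [mul_sub, Finset.sum_sub_distrib, mul_one_div]
  have hcomm : ∑ j, x j * (Real.exp (x j) / Z) = ∑ j, Real.exp (x j) / Z * x j :=
    Finset.sum_congr rfl fun _ _ => mul_comm _ _
  rw [← Finset.sum_div, hcomm]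
  linarith

lemma sum_sum_sub_mul_sub (u v : ι → ℝ) :
    ∑ i, ∑ j, (u i - u j) * (v i - v j) =
      2 * (Fintype.card ι * ∑ i, u i * v i - (∑ i, u i) * ∑ i, v i) := by
  simp only [sub_mul, mul_sub, Finset.sum_sub_distrib, ← Finset.mul_sum, ← Finset.sum_mul,
    Finset.sum_const, Finset.card_univ, nsmul_eq_mul,
    mul_left_comm (u _) (Fintype.card ι : ℝ)]
  ring

lemma two_mul_sum_sq_le_sum_mul_softmax_sub [Nonempty ι] (x : ι → ℝ) :
    2 * ∑ j, (Real.exp (x j) / ∑ l, Real.exp (x l) - 1 / Fintype.card ι) ^ 2 ≤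
      ∑ j, x j * (Real.exp (x j) / ∑ l, Real.exp (x l) - 1 / Fintype.card ι) := by
  have hZ : 0 < ∑ l, Real.exp (x l) :=
    Finset.sum_pos (fun _ _ => Real.exp_pos _) Finset.univ_nonempty
  have hc : (0 : ℝ) < Fintype.card ι := by exact_mod_cast Fintype.card_pos
  have hf := sum_exp_div_sum_exp x
  set Z := ∑ l, Real.exp (x l)
  set f : ι → ℝ := fun j => Real.exp (x j) / Z with hfdef
  have hfpos : ∀ j, 0 < f j := fun j => by simp only [hfdef]; positivity
  have hlog : ∀ j, Real.log (f j) = x j - Real.log Z := fun j => by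
    rw [hfdef, Real.log_div (Real.exp_pos _).ne' hZ.ne', Real.log_exp]
  have key : ∀ i j, 2 * ((f i - f j) * (f i - f j)) ≤ (f i - f j) * (x i - x j) := by
    intro i j
    rcases eq_or_ne i j with rfl | hij
    · simp
    have hle : f i + f j ≤ 1 := by
      classical
      rw [← hf, ← Finset.sum_pair hij]
      exact Finset.sum_le_sum_of_subset_of_nonneg (Finset.subset_univ _)
        fun k _ _ => (hfpos k).le
    have := two_mul_sq_sub_le_mul_log_sub_log (hfpos i) (hfpos j) hle
    rw [hlog, hlog] at this
    linarith
  have hsum : ∑ i, ∑ j, 2 * ((f i - f j) * (f i - f j)) ≤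
      ∑ i, ∑ j, (f i - f j) * (x i - x j) :=
    Finset.sum_le_sum fun i _ => Finset.sum_le_sum fun j _ => key i j
  simp only [← Finset.mul_sum] at hsum
  rw [sum_sum_sub_mul_sub, sum_sum_sub_mul_sub] at hsum
  change ∑ j, f j = 1 at hf
  rw [hf] at hsum
  change 2 * ∑ j, (f j - 1 / Fintype.card ι) ^ 2 ≤ ∑ j, x j * (f j - 1 / Fintype.card ι)
  have h1 : ∑ j, (f j - 1 / Fintype.card ι) ^ 2 = ∑ j, f j * f j - 1 / Fintype.card ι := by
    simp only [sub_sq, Finset.sum_sub_distrib, Finset.sum_add_distrib, ← Finset.mul_sum,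
      ← Finset.sum_mul, hf, Finset.sum_const, Finset.card_univ, nsmul_eq_mul, ← pow_two]
    field_simp
    ring
  have h2 : ∑ j, x j * (f j - 1 / Fintype.card ι) =
      ∑ j, f j * x j - 1 / Fintype.card ι * ∑ j, x j := by
    simp only [mul_sub, Finset.sum_sub_distrib, ← Finset.sum_mul]
    rw [mul_comm (∑ j, x j)]
    congr 1
    exact Finset.sum_congr rfl fun _ _ => mul_comm _ _
  rw [h1, h2]
  refine le_of_mul_le_mul_left ?_ hc
  have e : (Fintype.card ι : ℝ) * (1 / Fintype.card ι) = 1 := mul_one_div_cancel hc.ne'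
  linear_combination hsum / 2 + (∑ j, x j - 2) * e

end BlockInequalities

/-- The convex potential of `fbar`: block by block, log-sum-exp minus its tangent at the origin. -/
noncomputable def fbarPotential (n m : ℕ) (s : Fin n × Fin m → ℝ) : ℝ :=
  ∑ i, (Real.log (∑ l, Real.exp (s (i, l))) - Real.log m - (∑ l, s (i, l)) / m)

section Potential

variable {n m : ℕ} [NeZero m]

lemma fbarPotential_nonneg (s : Fin n × Fin m → ℝ) : 0 ≤ fbarPotential n m s :=
  Finset.sum_nonneg fun i _ => by
    simpa using logSumExp_sub_log_card_sub_mean_nonneg fun l => s (i, l)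

lemma fbarPotential_le (s : Fin n × Fin m → ℝ) :
    fbarPotential n m s ≤ ∑ p, s p * fbar n m s p := by
  rw [Fintype.sum_prod_type]
  exact Finset.sum_le_sum fun i _ => by
    simpa [fbar, softmax] using logSumExp_sub_log_card_sub_mean_le fun l => s (i, l)

lemma two_mul_sum_fbar_sq_le (s : Fin n × Fin m → ℝ) :
    2 * ∑ p, fbar n m s p ^ 2 ≤ ∑ p, s p * fbar n m s p := by
  rw [Fintype.sum_prod_type, Fintype.sum_prod_type, Finset.mul_sum]
  exact Finset.sum_le_sum fun i _ => by
    simpa [fbar, softmax] using two_mul_sum_sq_le_sum_mul_softmax_sub fun l => s (i, l)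

lemma fbarPotential_le_sum_sq (s : Fin n × Fin m → ℝ) :
    fbarPotential n m s ≤ ∑ p, s p ^ 2 := by
  have h1 := fbarPotential_le s
  have h2 := two_mul_sum_fbar_sq_le s
  have h3 : 0 ≤ ∑ p, (s p - fbar n m s p) ^ 2 := Finset.sum_nonneg fun _ _ => sq_nonneg _
  have h4 : ∑ p, (s p - fbar n m s p) ^ 2 =
      ∑ p, s p ^ 2 - 2 * ∑ p, s p * fbar n m s p + ∑ p, fbar n m s p ^ 2 := by
    rw [Finset.mul_sum, ← Finset.sum_sub_distrib, ← Finset.sum_add_distrib]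
    exact Finset.sum_congr rfl fun _ _ => by ring
  have h5 : 0 ≤ ∑ p, s p ^ 2 := Finset.sum_nonneg fun _ _ => sq_nonneg _
  linarith

lemma hasDerivAt_fbarPotential {s : ℝ → Fin n × Fin m → ℝ} {s' : Fin n × Fin m → ℝ} {t : ℝ}
    (hs : HasDerivAt s s' t) :
    HasDerivAt (fun τ => fbarPotential n m (s τ)) (∑ p, fbar n m (s t) p * s' p) t := by
  have hs := hasDerivAt_pi.1 hs
  rw [Fintype.sum_prod_type]
  refine HasDerivAt.fun_sum fun i _ => ?_
  have hZ : (∑ l, Real.exp (s t (i, l))) ≠ 0 :=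
    (Finset.sum_pos (fun _ _ => Real.exp_pos _) Finset.univ_nonempty).ne'
  have h1 : HasDerivAt (fun τ => ∑ l, Real.exp (s τ (i, l)))
      (∑ l, Real.exp (s t (i, l)) * s' (i, l)) t :=
    HasDerivAt.fun_sum fun l _ => (hs (i, l)).exp
  have h2 : HasDerivAt (fun τ => ∑ l, s τ (i, l)) (∑ l, s' (i, l)) t :=
    HasDerivAt.fun_sum fun l _ => hs (i, l)
  refine (((h1.log hZ).sub_const (Real.log m)).sub (h2.div_const (m : ℝ))).congr_deriv ?_
  rw [Finset.sum_div, Finset.sum_div, ← Finset.sum_sub_distrib]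
  refine Finset.sum_congr rfl fun l _ => ?_
  simp only [fbar, softmax]
  ring

end Potential

section Matrix

variable {ι : Type*} [Fintype ι] [DecidableEq ι]

lemma Matrix.IsSymm.dotProduct_mulVec_le {W : Matrix ι ι ℝ} (hW : W.IsSymm) {μ : ℝ}
    (hμ : ∀ x : ℝ, Module.End.HasEigenvalue (Matrix.toLin' W) x → x ≤ μ) (y : ι → ℝ) :
    y ⬝ᵥ W *ᵥ y ≤ μ * (y ⬝ᵥ y) := by
  have hH : (μ • (1 : Matrix ι ι ℝ) - W).IsHermitian := by
    rw [Matrix.IsHermitian, Matrix.conjTranspose_eq_transpose_of_trivial, Matrix.transpose_sub,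
      Matrix.transpose_smul, Matrix.transpose_one, hW.eq]
  have hpos : (μ • (1 : Matrix ι ι ℝ) - W).PosSemidef := by
    rw [hH.posSemidef_iff_eigenvalues_nonneg]
    intro j
    have h := hH.mulVec_eigenvectorBasis j
    rw [Matrix.sub_mulVec, Matrix.smul_mulVec, Matrix.one_mulVec] at h
    have hne := hH.eigenvectorBasis.orthonormal.ne_zero j
    have := hμ (μ - hH.eigenvalues j) (Module.End.hasEigenvalue_of_hasEigenvector
      (x := ⇑(hH.eigenvectorBasis j)) ⟨Module.End.mem_eigenspace_iff.2 ?_, ?_⟩)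
    · simpa using this
    · rw [Matrix.toLin'_apply, sub_smul, ← h]
      abel
    · intro h0
      apply hne
      ext i
      exact congrFun h0 i
  have h := hpos.dotProduct_mulVec_nonneg y
  simp only [star_trivial, Matrix.sub_mulVec, Matrix.smul_mulVec, Matrix.one_mulVec,
    dotProduct_sub, dotProduct_smul, smul_eq_mul] at h
  linarith

lemma Matrix.sum_mulVec_sq_le (W : Matrix ι ι ℝ) (y : ι → ℝ) :
    ∑ p, (W *ᵥ y) p ^ 2 ≤ ‖Matrix.toEuclideanCLM (𝕜 := ℝ) W‖ ^ 2 * ∑ p, y p ^ 2 := by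
  have h := (Matrix.toEuclideanCLM (𝕜 := ℝ) W).le_opNorm (WithLp.toLp 2 y)
  have h2 := pow_le_pow_left₀ (norm_nonneg _) h 2
  rw [mul_pow, Matrix.toEuclideanCLM_toLp, EuclideanSpace.norm_sq_eq,
    EuclideanSpace.norm_sq_eq] at h2
  simpa using h2

end Matrix

lemma exists_lyapunov_weight {α g σ M : ℝ} (hα0 : 0 < α) (hα1 : α < 1) (hg : 0 < g) (hσ : 0 < σ)
    (h : 2 * α ^ 2 * (1 + α) * M ^ 2 / σ ^ 2 < g) :
    ∃ b, 0 < b ∧ b < α ∧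
      M ^ 2 * (b ^ 2 / (4 * (α - b)) + b * (1 + α) / 4) < g * (σ - 2 * (α - b)) := by
  rcases lt_or_ge σ (4 * α) with hlt | hge
  · refine ⟨α - σ / 4, by linarith, by linarith, ?_⟩
    rw [div_lt_iff₀ (by positivity)] at h
    obtain ⟨b, hb⟩ : ∃ b, b = α - σ / 4 := ⟨_, rfl⟩
    have hb0 : 0 < b := by linarith
    have hba : b < α := by linarith
    rw [← hb]
    have hσb : σ = 4 * (α - b) := by linarith
    have e : M ^ 2 * (b ^ 2 / (4 * (α - b)) + b * (1 + α) / 4) =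
        M ^ 2 * (b ^ 2 + b * (1 + α) * (α - b)) / σ := by
      rw [hσb]
      have : α - b ≠ 0 := by linarith
      field_simp
    rw [e, div_lt_iff₀ hσ]
    have hle : b ^ 2 + b * (1 + α) * (α - b) ≤ α ^ 2 * (1 + α) := by
      nlinarith [mul_pos hα0 (sub_pos.2 hba), mul_pos (mul_pos hα0 hα0) (sub_pos.2 hba),
        mul_pos hα0 (mul_pos hb0 hb0)]
    have := mul_le_mul_of_nonneg_left hle (sq_nonneg M)
    rw [show σ - 2 * (α - b) = σ / 2 by linarith]
    linarith
  · obtain ⟨b, hb0, hb1, hb2⟩ : ∃ b, 0 < b ∧ b ≤ α / 2 ∧ b * (M ^ 2 + 1) ≤ g * α := by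
      refine ⟨min (α / 2) (g * α / (M ^ 2 + 1)), by positivity, min_le_left _ _, ?_⟩
      rw [← le_div_iff₀ (by positivity)]
      exact min_le_right _ _
    refine ⟨b, hb0, by linarith, ?_⟩
    have h1 : b ^ 2 / (4 * (α - b)) ≤ b / 4 := by
      rw [div_le_iff₀ (by linarith)]
      nlinarith
    have h2 : b ^ 2 / (4 * (α - b)) + b * (1 + α) / 4 ≤ b := by nlinarith
    have h3 := mul_le_mul_of_nonneg_left h2 (sq_nonneg M)
    have h4 : g * (2 * α) ≤ g * (σ - 2 * (α - b)) :=
      mul_le_mul_of_nonneg_left (by linarith) hg.le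
    nlinarith [mul_pos hg hα0]

/-- A differential inequality `V' ≤ -c V` on `[0, ∞)` forces exponential decay. -/
lemma le_mul_exp_of_deriv_le_neg_mul {V V' : ℝ → ℝ} {c : ℝ}
    (hV : ∀ t, 0 ≤ t → HasDerivAt V (V' t) t) (hle : ∀ t, 0 ≤ t → V' t ≤ -c * V t) {t : ℝ}
    (ht : 0 ≤ t) : V t ≤ V 0 * Real.exp (-c * t) := by
  have hd : ∀ τ, 0 ≤ τ → HasDerivAt (fun τ => V τ * Real.exp (c * τ))
      (V' τ * Real.exp (c * τ) + V τ * (Real.exp (c * τ) * (c * 1))) τ := fun τ hτ =>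
    (hV τ hτ).mul (((hasDerivAt_id' τ).const_mul c).exp)
  have hanti : AntitoneOn (fun τ => V τ * Real.exp (c * τ)) (Set.Ici 0) := by
    refine antitoneOn_of_deriv_nonpos (convex_Ici 0)
      (fun τ hτ => (hd τ hτ).continuousAt.continuousWithinAt)
      (fun τ hτ => ?_) (fun τ hτ => ?_)
    · rw [interior_Ici] at hτ
      exact (hd τ (le_of_lt hτ)).differentiableAt.differentiableWithinAt
    · rw [interior_Ici] at hτ
      rw [(hd τ (le_of_lt hτ)).deriv]
      nlinarith [Real.exp_pos (c * τ), hle τ (le_of_lt hτ)]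
  have h := hanti Set.self_mem_Ici ht ht
  simp only [mul_zero, Real.exp_zero, mul_one] at h
  rw [neg_mul, Real.exp_neg, ← div_eq_mul_inv, le_div_iff₀ (Real.exp_pos _)]
  exact h

lemma neg_mul_sq_sub_mul_mul_le {d : ℝ} (hd : 0 < d) (b x w : ℝ) :
    -d * x ^ 2 - b * (x * w) ≤ b ^ 2 / (4 * d) * w ^ 2 := by
  have : b ^ 2 / (4 * d) * w ^ 2 - (-d * x ^ 2 - b * (x * w)) = (2 * d * x + b * w) ^ 2 / (4 * d) := by
    field_simp
    ring
  have h : 0 ≤ (2 * d * x + b * w) ^ 2 / (4 * d) := by positivity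
  linarith

/-- The dissipation estimate for the Lyapunov function of the system, abstracted from the
dynamics: `y` plays the role of `fbar s` and `w` that of `W *ᵥ y`. -/
lemma exists_dissipation_rate {α g μ M b : ℝ} (hα0 : 0 < α) (hb0 : 0 < b) (hbα : b < α) (hg : 0 < g)
    (hb : M ^ 2 * (b ^ 2 / (4 * (α - b)) + b * (1 + α) / 4) <
      g * (2 * (1 + α) - μ - 2 * (α - b))) :
    ∃ κ > 0, ∀ {ι : Type} [Fintype ι] (s a y w : ι → ℝ),
      2 * ∑ p, y p ^ 2 ≤ ∑ p, s p * y p →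
      ∑ p, y p * w p ≤ μ * ∑ p, y p ^ 2 →
      ∑ p, w p ^ 2 ≤ M ^ 2 * ∑ p, y p ^ 2 →
      ∑ p, (-(α - b) * a p ^ 2 - b * (1 + α) * s p ^ 2 - b * (a p * w p) +
          b * (1 + α) * (s p * w p) + g * (y p * w p - (1 + b) * (s p * y p))) ≤
        -κ * (∑ p, s p ^ 2 + ∑ p, a p ^ 2) := by
  set G := g * (2 * (1 + α) - μ - 2 * (α - b)) with hG
  set T := b ^ 2 / (4 * (α - b)) + b * (1 + α) / 4 with hT
  set C := b * (1 + α) with hC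
  have hd : 0 < α - b := by linarith
  have hC0 : 0 < C := by positivity
  have hT0 : 0 ≤ M ^ 2 * T := by positivity
  have hG0 : 0 < G := by linarith
  obtain ⟨r, hr0, hr1, hr⟩ : ∃ r : ℝ, 0 < r ∧ r < 1 ∧ M ^ 2 * T ≤ r * G := by
    refine ⟨(G + M ^ 2 * T) / (2 * G), by positivity, ?_, ?_⟩
    · rw [div_lt_one (by positivity)]
      linarith
    · rw [div_mul_eq_mul_div, le_div_iff₀ (by positivity)]
      nlinarith
  refine ⟨(1 - r) * min (α - b) C, mul_pos (by linarith) (lt_min hd hC0), ?_⟩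
  intro ι _ s a y w h1 h2 h3
  have hpt : ∀ p, -(α - b) * a p ^ 2 - C * s p ^ 2 - b * (a p * w p) +
      C * (s p * w p) + g * (y p * w p - (1 + b) * (s p * y p)) ≤
      -((1 - r) * min (α - b) C) * (s p ^ 2 + a p ^ 2) + T / r * w p ^ 2 +
        g * (y p * w p - (1 + b) * (s p * y p)) := by
    intro p
    have i1 := neg_mul_sq_sub_mul_mul_le (mul_pos hr0 hd) b (a p) (w p)
    have i2 := neg_mul_sq_sub_mul_mul_le (mul_pos hr0 hC0) (-C) (s p) (w p)
    have i3 : (1 - r) * min (α - b) C * a p ^ 2 ≤ (1 - r) * (α - b) * a p ^ 2 := by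
      gcongr
      exact min_le_left _ _
    have i4 : (1 - r) * min (α - b) C * s p ^ 2 ≤ (1 - r) * C * s p ^ 2 := by
      gcongr
      exact min_le_right _ _
    have e : T / r = b ^ 2 / (4 * (r * (α - b))) + (-C) ^ 2 / (4 * (r * C)) := by
      rw [hT]
      field_simp
    rw [e, add_mul]
    linarith
  refine (Finset.sum_le_sum fun p _ => hpt p).trans ?_
  simp only [Finset.sum_add_distrib, Finset.sum_sub_distrib, ← Finset.mul_sum]
  have hTr : T / r * ∑ p, w p ^ 2 ≤ G * ∑ p, y p ^ 2 := by
    have hY : 0 ≤ ∑ p, y p ^ 2 := Finset.sum_nonneg fun _ _ => sq_nonneg _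
    calc T / r * ∑ p, w p ^ 2 ≤ T / r * (M ^ 2 * ∑ p, y p ^ 2) := by gcongr
      _ = M ^ 2 * T / r * ∑ p, y p ^ 2 := by ring
      _ ≤ G * ∑ p, y p ^ 2 := by
        gcongr
        rw [div_le_iff₀ hr0]
        linarith
  have hgr : g * (∑ p, y p * w p - (1 + b) * ∑ p, s p * y p) ≤ -G * ∑ p, y p ^ 2 := by
    rw [hG]
    have := mul_le_mul_of_nonneg_left h1 (show 0 ≤ 1 + b by linarith)
    have := mul_le_mul_of_nonneg_left
      (show ∑ p, y p * w p - (1 + b) * ∑ p, s p * y p ≤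
        (μ - 2 * (1 + b)) * ∑ p, y p ^ 2 by linarith) hg.le
    linarith
  linarith

lemma quadratic_form_lower_bound {α b : ℝ} (x z : ℝ) :
    (b * (1 + α) - b ^ 2) / 4 * (x ^ 2 + z ^ 2) ≤
      (1 + b * (1 + α)) / 2 * (1 / 2 * z ^ 2 - b * (z * x) + b * (1 + α) / 2 * x ^ 2) := by
  linarith [sq_nonneg (z / 2 - b * x / 2), sq_nonneg (b * (1 + α) * x / 2 - b * z / 2)]

lemma exists_exponential_bound {n m : ℕ} [NeZero m]
    {W : Matrix (Fin n × Fin m) (Fin n × Fin m) ℝ} (hW : W.IsSymm) {μmax : ℝ}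
    (hmaxev : ∀ x : ℝ, Module.End.HasEigenvalue (Matrix.toLin' W) x → x ≤ μmax)
    {α ga : ℝ} (hα : α ∈ Set.Ioo (0 : ℝ) 1) (hga0 : 0 < ga)
    (hμ : μmax < 2 * (1 + α))
    (hga : 2 * α ^ 2 * (1 + α) * ‖Matrix.toEuclideanCLM (𝕜 := ℝ) W‖ ^ 2 /
        (2 * (1 + α) - μmax) ^ 2 < ga) :
    ∃ K > 0, ∃ c > 0, ∀ sb ab : ℝ → (Fin n × Fin m → ℝ),
      (∀ t : ℝ, 0 ≤ t → HasDerivAt sb (W.mulVec (fbar n m (sb t)) - sb t - ab t) t) →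
      (∀ t : ℝ, 0 ≤ t → HasDerivAt ab (ga • fbar n m (sb t) - α • ab t) t) →
      ∀ t : ℝ, 0 ≤ t → ∑ p, sb t p ^ 2 + ∑ p, ab t p ^ 2 ≤
        K * (∑ p, sb 0 p ^ 2 + ∑ p, ab 0 p ^ 2) * Real.exp (-c * t) := by
  obtain ⟨hα0, hα1⟩ := hα
  obtain ⟨b, hb0, hbα, hb⟩ := exists_lyapunov_weight hα0 hα1 hga0 (sub_pos.2 hμ) hga
  obtain ⟨κ, hκ0, hκ⟩ := exists_dissipation_rate hα0 hb0 hbα hga0 hb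
  set V : (Fin n × Fin m → ℝ) → (Fin n × Fin m → ℝ) → ℝ := fun s a =>
    ∑ p, (1 / 2 * a p ^ 2 - b * (a p * s p) + b * (1 + α) / 2 * s p ^ 2) +
      ga * fbarPotential n m s with hV
  set D := (b * (1 + α) - b ^ 2) / 4 with hD
  set τ := (1 + b * (1 + α)) / 2 with hτ
  have hD0 : 0 < D := by
    rw [hD]
    nlinarith
  have hτ0 : 0 < τ := by positivity
  have hlow : ∀ s a, D / τ * (∑ p, s p ^ 2 + ∑ p, a p ^ 2) ≤ V s a := by
    intro s a
    have hF := mul_nonneg hga0.le (fbarPotential_nonneg s)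
    have : D * (∑ p, s p ^ 2 + ∑ p, a p ^ 2) ≤
        τ * ∑ p, (1 / 2 * a p ^ 2 - b * (a p * s p) + b * (1 + α) / 2 * s p ^ 2) := by
      rw [← Finset.sum_add_distrib, Finset.mul_sum, Finset.mul_sum]
      exact Finset.sum_le_sum fun p _ => quadratic_form_lower_bound (s p) (a p)
    rw [div_mul_eq_mul_div, div_le_iff₀ hτ0]
    simp only [hV]
    nlinarith
  have hup : ∀ s a, V s a ≤ (2 + ga) * (∑ p, s p ^ 2 + ∑ p, a p ^ 2) := by
    intro s a
    have hF := mul_le_mul_of_nonneg_left (fbarPotential_le_sum_sq s) hga0.le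
    have hA : 0 ≤ ga * ∑ p, a p ^ 2 :=
      mul_nonneg hga0.le (Finset.sum_nonneg fun _ _ => sq_nonneg _)
    have : ∑ p, (1 / 2 * a p ^ 2 - b * (a p * s p) + b * (1 + α) / 2 * s p ^ 2) ≤
        2 * (∑ p, s p ^ 2 + ∑ p, a p ^ 2) := by
      rw [← Finset.sum_add_distrib, Finset.mul_sum]
      refine Finset.sum_le_sum fun p _ => ?_
      have hC : b * (1 + α) ≤ 2 := by nlinarith
      have := mul_le_mul_of_nonneg_right hC (sq_nonneg (s p))
      nlinarith [mul_nonneg hb0.le (sq_nonneg (a p + s p)),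
        mul_nonneg (show 0 ≤ 1 - b by linarith) (add_nonneg (sq_nonneg (a p)) (sq_nonneg (s p)))]
    simp only [hV]
    linarith
  refine ⟨(2 + ga) / (D / τ), by positivity, κ / (2 + ga), by positivity, ?_⟩
  intro sb ab hs ha t ht
  have hderiv : ∀ t, 0 ≤ t → HasDerivAt (fun t => V (sb t) (ab t))
      (∑ p, (-(α - b) * ab t p ^ 2 - b * (1 + α) * sb t p ^ 2 -
        b * (ab t p * (W *ᵥ fbar n m (sb t)) p) +
        b * (1 + α) * (sb t p * (W *ᵥ fbar n m (sb t)) p) +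
        ga * (fbar n m (sb t) p * (W *ᵥ fbar n m (sb t)) p -
          (1 + b) * (sb t p * fbar n m (sb t) p)))) t := by
    intro t ht
    have hs' := hasDerivAt_pi.1 (hs t ht)
    have ha' := hasDerivAt_pi.1 (ha t ht)
    have hq := HasDerivAt.fun_sum (u := Finset.univ) fun p _ =>
      ((((ha' p).pow 2).const_mul (1 / 2)).sub (((ha' p).mul (hs' p)).const_mul b)).add
        (((hs' p).pow 2).const_mul (b * (1 + α) / 2))
    refine (hq.add ((hasDerivAt_fbarPotential (hs t ht)).const_mul ga)).congr_deriv ?_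
    rw [Finset.mul_sum, ← Finset.sum_add_distrib]
    refine Finset.sum_congr rfl fun p _ => ?_
    simp only [Pi.sub_apply, Pi.smul_apply, smul_eq_mul]
    push_cast
    ring
  have hdecay := le_mul_exp_of_deriv_le_neg_mul (c := κ / (2 + ga)) hderiv (fun t _ => by
    refine (hκ (sb t) (ab t) (fbar n m (sb t)) (W *ᵥ fbar n m (sb t))
      (two_mul_sum_fbar_sq_le _) ?_ (W.sum_mulVec_sq_le _)).trans ?_
    · simpa [dotProduct, pow_two] using hW.dotProduct_mulVec_le hmaxev (fbar n m (sb t))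
    · have := mul_le_mul_of_nonneg_left (hup (sb t) (ab t))
        (show 0 ≤ κ / (2 + ga) by positivity)
      rw [← mul_assoc, div_mul_cancel₀ _ (by positivity)] at this
      linarith) ht
  have h := (hlow (sb t) (ab t)).trans (hdecay.trans
    (mul_le_mul_of_nonneg_right (hup (sb 0) (ab 0)) (Real.exp_pos _).le))
  rw [mul_comm, ← le_div_iff₀ (by positivity)] at h
  refine h.trans_eq ?_
  ring

/-- Proposition 2: if `W` is symmetric, `μ_max(W) < 2(1+α)`, `σ = 2(1+α) − μ_max(W)` and
`ḡ_a > 2α²(1+α)‖W‖²/σ²` (with `‖W‖` the operator norm of `W`), then the origin is a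
globally asymptotically stable equilibrium of system (7): it is Lyapunov stable, and
every solution on `[0, ∞)` converges to the origin. -/
theorem stmt14 (n m : ℕ) (hn : 1 ≤ n) (hm : 2 ≤ m)
    (W : Matrix (Fin n × Fin m) (Fin n × Fin m) ℝ) (hW : W.IsSymm)
    (μmax : ℝ)
    (hev : Module.End.HasEigenvalue (Matrix.toLin' W) μmax)
    (hmaxev : ∀ x : ℝ, Module.End.HasEigenvalue (Matrix.toLin' W) x → x ≤ μmax)
    (α ga : ℝ) (hα : α ∈ Set.Ioo (0 : ℝ) 1) (hga0 : 0 < ga)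
    (hμ : μmax < 2 * (1 + α))
    (hga : 2 * α ^ 2 * (1 + α) * ‖Matrix.toEuclideanCLM (𝕜 := ℝ) W‖ ^ 2 /
        (2 * (1 + α) - μmax) ^ 2 < ga) :
    (∀ ε > (0 : ℝ), ∃ δ > (0 : ℝ), ∀ sb ab : ℝ → (Fin n × Fin m → ℝ),
      (∀ t : ℝ, 0 ≤ t → HasDerivAt sb (W.mulVec (fbar n m (sb t)) - sb t - ab t) t) →
      (∀ t : ℝ, 0 ≤ t → HasDerivAt ab (ga • fbar n m (sb t) - α • ab t) t) →
      Real.sqrt ((∑ p : Fin n × Fin m, sb 0 p ^ 2) + ∑ p : Fin n × Fin m, ab 0 p ^ 2) < δ →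
      ∀ t : ℝ, 0 ≤ t →
        Real.sqrt ((∑ p : Fin n × Fin m, sb t p ^ 2) +
          ∑ p : Fin n × Fin m, ab t p ^ 2) < ε) ∧
    (∀ sb ab : ℝ → (Fin n × Fin m → ℝ),
      (∀ t : ℝ, 0 ≤ t → HasDerivAt sb (W.mulVec (fbar n m (sb t)) - sb t - ab t) t) →
      (∀ t : ℝ, 0 ≤ t → HasDerivAt ab (ga • fbar n m (sb t) - α • ab t) t) →
      Filter.Tendsto (fun t : ℝ => (sb t, ab t)) Filter.atTop (nhds (0, 0))) := by
  have : NeZero m := ⟨by omega⟩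
  obtain ⟨K, hK, c, hc, hbound⟩ := exists_exponential_bound hW hmaxev hα hga0 hμ hga
  have hnonneg : ∀ v : Fin n × Fin m → ℝ, 0 ≤ ∑ p, v p ^ 2 := fun v =>
    Finset.sum_nonneg fun _ _ => sq_nonneg _
  constructor
  · intro ε hε
    refine ⟨ε / Real.sqrt K, by positivity, fun sb ab hs ha h0 t ht => ?_⟩
    have hS0 := add_nonneg (hnonneg (sb 0)) (hnonneg (ab 0))
    have hexp : Real.exp (-c * t) ≤ 1 := Real.exp_le_one_iff.2 (by nlinarith)
    have hle := (hbound sb ab hs ha t ht).trans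
      (mul_le_of_le_one_right (mul_nonneg hK.le hS0) hexp)
    refine (Real.sqrt_le_sqrt hle).trans_lt ?_
    rwa [Real.sqrt_mul hK.le, mul_comm, ← lt_div_iff₀ (Real.sqrt_pos.2 hK)]
  · intro sb ab hs ha
    set S0 := ∑ p, sb 0 p ^ 2 + ∑ p, ab 0 p ^ 2
    have hlim : Filter.Tendsto (fun t => Real.sqrt (K * S0 * Real.exp (-c * t)))
        Filter.atTop (nhds 0) := by
      have h1 : Filter.Tendsto (fun t : ℝ => Real.exp (-c * t)) Filter.atTop (nhds 0) :=
        Real.tendsto_exp_atBot.comp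
          (Filter.tendsto_id.const_mul_atTop_of_neg (neg_lt_zero.2 hc))
      have h2 := (Real.continuous_sqrt.tendsto _).comp (h1.const_mul (K * S0))
      simpa [Function.comp_def] using h2
    rw [nhds_prod_eq]
    refine Filter.Tendsto.prodMk ?_ ?_ <;>
    · refine tendsto_pi_nhds.2 fun p => squeeze_zero_norm' ?_ hlim
      filter_upwards [Filter.eventually_ge_atTop 0] with t ht
      have hle := hbound sb ab hs ha t ht
      rw [Real.norm_eq_abs]
      refine Real.abs_le_sqrt (le_trans ?_ hle)
      have h1 := Finset.single_le_sum (f := fun p => sb t p ^ 2)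
        (fun _ _ => sq_nonneg _) (Finset.mem_univ p)
      have h2 := Finset.single_le_sum (f := fun p => ab t p ^ 2)
        (fun _ _ => sq_nonneg _) (Finset.mem_univ p)
      have h3 := hnonneg (sb t)
      have h4 := hnonneg (ab t)
      linarith
end
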